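/- arXiv:1908.08395 — 2 statements merged into one kernel-verified Lean document; each statement's English description precedes it below -/
import Mathlib

section
/- For the R-matrix R of a vector space V satisfying the Yang–Baxter equation R_{12}R_{13}R_{23} = R_{23}R_{13}R_{12}, an element R̃ ∈ Aut(V⊗V) satisfying R̃_{21}R̃_{31}R_{23} = R_{23}R̃_{31}R̃_{21} and R_{12}R̃_{31}R̃_{32} = R̃_{32}R̃_{31}R_{12}, and scalar f with R_{12}R_{21} = f·Id, the shuffle product A_{1...k} * B_{1...l} = Σ over partitions {1,...,k+l} = {a₁<...<a_k} ⊔ {b₁<...<b_l} of [product of R_{a_i b_j} over pairs with a_i < b_j] · A_{a₁...a_k} · [product of R̃_{a_i b_j}] · B_{b₁...b_l} · [product of R_{a_i b_j} over pairs with a_i > b_j] defines an associative multiplication on ⊕_{k≥0} End(V^{⊗k}) with unit 1 ∈ End(V^{⊗0}). -/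
/-!
STATEMENT 6: Given an R-matrix R satisfying the Yang–Baxter equation, an
element R̃ satisfying the mixed Yang–Baxter relations, and a scalar f with
R₁₂R₂₁ = f·Id, the shuffle product defines an associative multiplication on
`⊕_{k≥0} End(V^{⊗k})` with unit `1 ∈ End(V^{⊗0})`.  Here `V = Kⁿ` and
`End(V^{⊗k})` is modeled as matrices indexed by `Fin k → Fin n`.
-/

/-- Index set for `V^{⊗k}`, `V = Kⁿ`. -/
abbrev Idx (n k : ℕ) := Fin k → Fin n

/-- `X_{a₁...a_k}`: the operator `X ∈ End(V^{⊗k})` acting on the tensor factors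
`ι 0, ..., ι (k-1)` of `V^{⊗N}`, and as the identity on the other factors. -/
def embed {K : Type*} [Field K] {n k N : ℕ} (ι : Fin k → Fin N)
    (X : Matrix (Idx n k) (Idx n k) K) : Matrix (Idx n N) (Idx n N) K :=
  fun f g => X (f ∘ ι) (g ∘ ι) *
    ∏ b : Fin N, if b ∈ Finset.image ι Finset.univ then 1
      else (if f b = g b then 1 else 0)

section Shuffle

variable {K : Type*} [Field K] {n : ℕ}
variable (R Rt : Matrix (Idx n 2) (Idx n 2) K)

/-- `∏ R_{a_i b_j}` over pairs with `a_i < b_j`, ordered as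
`R_{a_k b_1} ⋯ R_{a_1 b_l}` (for each `j` ascending, `i` descending). -/
def prodRlt {k l N : ℕ} (a : Fin k → Fin N) (b : Fin l → Fin N) :
    Matrix (Idx n N) (Idx n N) K :=
  (((List.finRange l).map fun j =>
    (((List.finRange k).reverse.map fun i =>
      if a i < b j then embed ![a i, b j] R else 1)).prod)).prod

/-- `∏ R_{a_i b_j}` over pairs with `a_i > b_j`, in the same order. -/
def prodRgt {k l N : ℕ} (a : Fin k → Fin N) (b : Fin l → Fin N) :
    Matrix (Idx n N) (Idx n N) K :=
  (((List.finRange l).map fun j =>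
    (((List.finRange k).reverse.map fun i =>
      if b j < a i then embed ![a i, b j] R else 1)).prod)).prod

/-- `R̃_{a_1 b_l} ⋯ R̃_{a_k b_1}` (for each `i` ascending, `j` descending). -/
def prodRt {k l N : ℕ} (a : Fin k → Fin N) (b : Fin l → Fin N) :
    Matrix (Idx n N) (Idx n N) K :=
  (((List.finRange k).map fun i =>
    (((List.finRange l).reverse.map fun j =>
      embed ![a i, b j] Rt)).prod)).prod

/-- The shuffle product of `A ∈ End(V^{⊗k})` and `B ∈ End(V^{⊗l})`:
the sum over partitions `{1,…,k+l} = {a₁<…<a_k} ⊔ {b₁<…<b_l}` of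
`[∏_{a_i<b_j} R_{a_ib_j}] A_{a₁…a_k} [R̃_{a_1b_l}…R̃_{a_kb_1}] B_{b₁…b_l}
 [∏_{a_i>b_j} R_{a_ib_j}]`. -/
def shufMul (k l : ℕ) (A : Matrix (Idx n k) (Idx n k) K)
    (B : Matrix (Idx n l) (Idx n l) K) :
    Matrix (Idx n (k + l)) (Idx n (k + l)) K :=
  ∑ s : {s : Finset (Fin (k + l)) // s.card = k},
    let a : Fin k → Fin (k + l) := s.1.orderEmbOfFin s.2
    let b : Fin l → Fin (k + l) := (s.1ᶜ).orderEmbOfFin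
      (by rw [Finset.card_compl, s.2, Fintype.card_fin]; omega)
    prodRlt R a b * embed a A * prodRt Rt a b * embed b B * prodRgt R a b

/-- Transport along an equality of the number of tensor factors. -/
def recast {m m' : ℕ} (h : m = m') (M : Matrix (Idx n m) (Idx n m) K) :
    Matrix (Idx n m') (Idx n m') K := h ▸ M

/-- The underlying space `⊕_{k≥0} End(V^{⊗k})` (as a graded product; the
shuffle product only involves finitely many terms in each degree). -/
def GA (n : ℕ) (K : Type*) [Field K] :=
  (k : ℕ) → Matrix (Idx n k) (Idx n k) K

/-- The shuffle product on `⊕_k End(V^{⊗k})`. -/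
def gaMul (x y : GA n K) : GA n K := fun N =>
  ∑ k ∈ (Finset.range (N + 1)).attach,
    recast (by have := Finset.mem_range.mp k.2; omega)
      (shufMul R Rt k.1 (N - k.1) (x k.1) (y (N - k.1)))

/-- The unit `1 ∈ End(V^{⊗0})`. -/
def gaOne : GA n K := fun N =>
  if h : N = 0 then recast h.symm 1 else 0

end Shuffle

section Abs
variable {ι M : Type*} [DecidableEq ι] [Monoid M]

def Sx (s : ι → M) (P : Finset ι) : List ι → M
  | [] => 1
  | p :: v => if p ∈ P then s p * Sx s P v else Sx s P v

def Sr (s : ι → M) (P : Finset ι) : List ι → M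
  | [] => 1
  | p :: v => if p ∈ P then Sr s P v * s p else Sr s P v

def XX (r : ι → ι → M) (P Q : Finset ι) : List ι → M
  | [] => 1
  | p :: v => if p ∈ Q then XX r P Q v * Sx (fun x => r x p) P v else XX r P Q v

def YY (r : ι → ι → M) (P Q : Finset ι) : List ι → M
  | [] => 1
  | p :: v => if p ∈ Q then Sr (fun x => r x p) P v * YY r P Q v else YY r P Q v

theorem comm_Sx (z : M) (s : ι → M) (P : Finset ι) (v : List ι)
    (h : ∀ x ∈ v, x ∈ P → Commute z (s x)) : Commute z (Sx s P v) := by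
  induction v with
  | nil => exact Commute.one_right z
  | cons p v ih =>
    have ih' := ih (fun x hx => h x (List.mem_cons_of_mem _ hx))
    unfold Sx
    split_ifs with hp
    · exact (h p List.mem_cons_self hp).mul_right ih'
    · exact ih'

theorem comm_Sr (z : M) (s : ι → M) (P : Finset ι) (v : List ι)
    (h : ∀ x ∈ v, x ∈ P → Commute z (s x)) : Commute z (Sr s P v) := by
  induction v with
  | nil => exact Commute.one_right z
  | cons p v ih =>
    have ih' := ih (fun x hx => h x (List.mem_cons_of_mem _ hx))
    unfold Sr
    split_ifs with hp
    · exact ih'.mul_right (h p List.mem_cons_self hp)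
    · exact ih'

theorem comm_XX (z : M) (r : ι → ι → M) (P Q : Finset ι) (v : List ι)
    (h : ∀ x ∈ v, ∀ y ∈ v, x ∈ P → y ∈ Q → Commute z (r x y)) : Commute z (XX r P Q v) := by
  induction v with
  | nil => exact Commute.one_right z
  | cons p v ih =>
    have ih' := ih (fun x hx y hy =>
      h x (List.mem_cons_of_mem _ hx) y (List.mem_cons_of_mem _ hy))
    unfold XX
    split_ifs with hp
    · exact ih'.mul_right (comm_Sx _ _ _ _ fun x hx hxP =>
        h x (List.mem_cons_of_mem _ hx) p List.mem_cons_self hxP hp)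
    · exact ih'

theorem comm_YY (z : M) (r : ι → ι → M) (P Q : Finset ι) (v : List ι)
    (h : ∀ x ∈ v, ∀ y ∈ v, x ∈ P → y ∈ Q → Commute z (r x y)) : Commute z (YY r P Q v) := by
  induction v with
  | nil => exact Commute.one_right z
  | cons p v ih =>
    have ih' := ih (fun x hx y hy =>
      h x (List.mem_cons_of_mem _ hx) y (List.mem_cons_of_mem _ hy))
    unfold YY
    split_ifs with hp
    · exact (comm_Sr _ _ _ _ fun x hx hxP =>
        h x (List.mem_cons_of_mem _ hx) p List.mem_cons_self hxP hp).mul_right ih'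
    · exact ih'

theorem op_Sr (s : ι → M) (P : Finset ι) (v : List ι) :
    Sr (fun x => MulOpposite.op (s x)) P v = MulOpposite.op (Sx s P v) := by
  induction v with
  | nil => rfl
  | cons p v ih => unfold Sr Sx; split_ifs <;> simp [ih]

theorem op_Sx (s : ι → M) (P : Finset ι) (v : List ι) :
    Sx (fun x => MulOpposite.op (s x)) P v = MulOpposite.op (Sr s P v) := by
  induction v with
  | nil => rfl
  | cons p v ih => unfold Sr Sx; split_ifs <;> simp [ih]

theorem op_XX (r : ι → ι → M) (P Q : Finset ι) (v : List ι) :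
    XX (fun x y => MulOpposite.op (r x y)) P Q v = MulOpposite.op (YY r P Q v) := by
  induction v with
  | nil => rfl
  | cons p v ih => unfold XX YY; split_ifs <;> simp [ih, op_Sx]

/-- Row swap. -/
theorem G_inner (r : ι → ι → M) (s : ι → M) (P : Finset ι) (p : ι) (v : List ι)
    (hv : v.Nodup)
    (hs : ∀ x ∈ P, s p * s x * r x p = r x p * s x * s p)
    (hc : ∀ x ∈ P, ∀ z ∈ P, z ≠ x → Commute (s z) (r x p)) (hpv : p ∉ v) :
    s p * Sx s P v * Sx (fun x => r x p) P v = Sx (fun x => r x p) P v * Sx s P v * s p := by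
  induction v with
  | nil => simp [Sx]
  | cons x v ih =>
    rw [List.nodup_cons] at hv
    have ih' := ih hv.2 (fun h => hpv (List.mem_cons_of_mem _ h))
    unfold Sx
    split_ifs with hx
    · have h1 : Commute (r x p) (Sx s P v) := comm_Sx _ _ _ _ fun z hz hzP =>
        (hc x hx z hzP (by rintro rfl; exact hv.1 hz)).symm
      have h2 : Commute (s x) (Sx (fun x => r x p) P v) := comm_Sx _ _ _ _ fun z hz hzP =>
        (hc z hzP x hx (by rintro rfl; exact hv.1 hz))
      calc s p * (s x * Sx s P v) * (r x p * Sx (fun x => r x p) P v)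
          = s p * s x * (Sx s P v * r x p) * Sx (fun x => r x p) P v := by
            simp only [mul_assoc]
        _ = (s p * s x * r x p) * Sx s P v * Sx (fun x => r x p) P v := by
            rw [← h1.eq]; simp only [mul_assoc]
        _ = r x p * s x * (s p * Sx s P v * Sx (fun x => r x p) P v) := by
            rw [hs x hx]; simp only [mul_assoc]
        _ = r x p * (s x * Sx (fun x => r x p) P v) * Sx s P v * s p := by
            rw [ih']; simp only [mul_assoc]
        _ = _ := by rw [h2.eq]; simp only [mul_assoc]
    · exact ih'

theorem G_main (r : ι → ι → M) (s : ι → M) (P Q : Finset ι) (hPQ : Disjoint P Q) (v : List ι)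
    (hv : v.Nodup)
    (hs : ∀ x ∈ P, ∀ q ∈ Q, s q * s x * r x q = r x q * s x * s q)
    (hc : ∀ x ∈ P, ∀ y ∈ Q, ∀ z ∈ P ∪ Q, z ≠ x → z ≠ y → Commute (s z) (r x y)) :
    Sx s (P ∪ Q) v * XX r P Q v = XX r P Q v * Sx s P v * Sx s Q v := by
  have hne : ∀ x ∈ P, ∀ y ∈ Q, x ≠ y := fun x hx y hy => Finset.disjoint_iff_ne.mp hPQ x hx y hy
  induction v with
  | nil => simp [Sx, XX]
  | cons p v ih =>
    rw [List.nodup_cons] at hv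
    have ih' := ih hv.2
    have hpX : p ∈ P ∪ Q → Commute (s p) (XX r P Q v) := fun hp => comm_XX _ _ _ _ _
      fun x hx y hy hxP hyQ => hc x hxP y hyQ p hp (by rintro rfl; exact hv.1 hx)
        (by rintro rfl; exact hv.1 hy)
    unfold Sx XX
    by_cases hp : p ∈ P
    · have hq : p ∉ Q := fun h => hne p hp p h rfl
      have hu : p ∈ P ∪ Q := Finset.mem_union_left _ hp
      simp only [hp, hq, hu, if_true, if_false]
      rw [mul_assoc, ih', ← mul_assoc, ← mul_assoc, (hpX hu).eq]; simp only [mul_assoc]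
    · by_cases hq : p ∈ Q
      · have hu : p ∈ P ∪ Q := Finset.mem_union_right _ hq
        simp only [hp, hq, hu, if_true, if_false]
        have h2 : Commute (Sx s Q v) (Sx (fun x => r x p) P v) :=
          comm_Sx _ _ _ _ fun x hx hxP => (comm_Sx _ _ _ _ fun z hz hzQ =>
            (hc x hxP p hq z (Finset.mem_union_right _ hzQ) (hne x hxP z hzQ).symm
              (by rintro rfl; exact hv.1 hz)).symm).symm
        have h3 := G_inner r s P p v hv.2 (fun x hx => hs x hx p hq)
          (fun x hx z hz hzx => hc x hx p hq z (Finset.mem_union_left _ hz) hzx (hne z hz p hq)) hv.1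
        calc s p * Sx s (P ∪ Q) v * (XX r P Q v * Sx (fun x => r x p) P v)
            = s p * (Sx s (P ∪ Q) v * XX r P Q v) * Sx (fun x => r x p) P v := by
              simp only [mul_assoc]
          _ = (s p * XX r P Q v) * Sx s P v * (Sx s Q v * Sx (fun x => r x p) P v) := by
              rw [ih']; simp only [mul_assoc]
          _ = XX r P Q v * (s p * Sx s P v * Sx (fun x => r x p) P v) * Sx s Q v := by
              rw [(hpX hu).eq, h2.eq]; simp only [mul_assoc]
          _ = _ := by rw [h3]; simp only [mul_assoc]
      · have hu : p ∉ P ∪ Q := by simp [hp, hq]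
        simp only [hp, hq, hu, if_false]
        exact ih'

theorem H_inner (r : ι → ι → M) (s : ι → M) (P : Finset ι) (p : ι) (v : List ι)
    (hv : v.Nodup)
    (hs : ∀ x ∈ P, s x * s p * r x p = r x p * s p * s x)
    (hc : ∀ x ∈ P, ∀ z ∈ P, z ≠ x → Commute (s z) (r x p)) (hpv : p ∉ v) :
    Sr s P v * s p * Sx (fun x => r x p) P v = Sx (fun x => r x p) P v * s p * Sr s P v := by
  induction v with
  | nil => simp [Sx, Sr]
  | cons x v ih =>
    rw [List.nodup_cons] at hv
    have ih' := ih hv.2 (fun h => hpv (List.mem_cons_of_mem _ h))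
    unfold Sx Sr
    split_ifs with hx
    · have h1 : Commute (r x p) (Sr s P v) := comm_Sr _ _ _ _ fun z hz hzP =>
        (hc x hx z hzP (by rintro rfl; exact hv.1 hz)).symm
      have h2 : Commute (s x) (Sx (fun x => r x p) P v) := comm_Sx _ _ _ _ fun z hz hzP =>
        (hc z hzP x hx (by rintro rfl; exact hv.1 hz))
      calc Sr s P v * s x * s p * (r x p * Sx (fun x => r x p) P v)
          = Sr s P v * (s x * s p * r x p) * Sx (fun x => r x p) P v := by
            simp only [mul_assoc]
        _ = (Sr s P v * r x p) * s p * (s x * Sx (fun x => r x p) P v) := by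
            rw [hs x hx]; simp only [mul_assoc]
        _ = r x p * (Sr s P v * s p * Sx (fun x => r x p) P v) * s x := by
            rw [← h1.eq, h2.eq]; simp only [mul_assoc]
        _ = _ := by rw [ih']; simp only [mul_assoc]
    · exact ih'

theorem H_main (r : ι → ι → M) (s : ι → M) (P Q : Finset ι) (hPQ : Disjoint P Q) (v : List ι)
    (hv : v.Nodup)
    (hs : ∀ x ∈ P, ∀ q ∈ Q, s x * s q * r x q = r x q * s q * s x)
    (hc : ∀ x ∈ P, ∀ y ∈ Q, ∀ z ∈ P ∪ Q, z ≠ x → z ≠ y → Commute (s z) (r x y)) :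
    Sr s (P ∪ Q) v * XX r P Q v = XX r P Q v * Sr s Q v * Sr s P v := by
  have hne : ∀ x ∈ P, ∀ y ∈ Q, x ≠ y := fun x hx y hy => Finset.disjoint_iff_ne.mp hPQ x hx y hy
  induction v with
  | nil => simp [Sr, XX]
  | cons p v ih =>
    rw [List.nodup_cons] at hv
    have ih' := ih hv.2
    have hpX : p ∈ P ∪ Q → Commute (s p) (XX r P Q v) := fun hp => comm_XX _ _ _ _ _
      fun x hx y hy hxP hyQ => hc x hxP y hyQ p hp (by rintro rfl; exact hv.1 hx)
        (by rintro rfl; exact hv.1 hy)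
    unfold Sr XX
    by_cases hp : p ∈ P
    · have hq : p ∉ Q := fun h => hne p hp p h rfl
      have hu : p ∈ P ∪ Q := Finset.mem_union_left _ hp
      simp only [hp, hq, hu, if_true, if_false]
      rw [mul_assoc, (hpX hu).eq, ← mul_assoc, ih']; simp only [mul_assoc]
    · by_cases hq : p ∈ Q
      · have hu : p ∈ P ∪ Q := Finset.mem_union_right _ hq
        simp only [hp, hq, hu, if_true, if_false]
        have h2 : Commute (Sr s Q v) (Sx (fun x => r x p) P v) :=
          comm_Sx _ _ _ _ fun x hx hxP => (comm_Sr _ _ _ _ fun z hz hzQ =>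
            (hc x hxP p hq z (Finset.mem_union_right _ hzQ) (hne x hxP z hzQ).symm
              (by rintro rfl; exact hv.1 hz)).symm).symm
        have h3 := H_inner r s P p v hv.2 (fun x hx => hs x hx p hq)
          (fun x hx z hz hzx => hc x hx p hq z (Finset.mem_union_left _ hz) hzx (hne z hz p hq)) hv.1
        calc Sr s (P ∪ Q) v * s p * (XX r P Q v * Sx (fun x => r x p) P v)
            = Sr s (P ∪ Q) v * (s p * XX r P Q v) * Sx (fun x => r x p) P v := by
              simp only [mul_assoc]
          _ = (Sr s (P ∪ Q) v * XX r P Q v) * s p * Sx (fun x => r x p) P v := by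
              rw [(hpX hu).eq]; simp only [mul_assoc]
          _ = XX r P Q v * Sr s Q v * (Sr s P v * s p * Sx (fun x => r x p) P v) := by
              rw [ih']; simp only [mul_assoc]
          _ = XX r P Q v * (Sr s Q v * Sx (fun x => r x p) P v) * s p * Sr s P v := by
              rw [h3]; simp only [mul_assoc]
          _ = _ := by rw [h2.eq]; simp only [mul_assoc]
      · have hu : p ∉ P ∪ Q := by simp [hp, hq]
        simp only [hp, hq, hu, if_false]
        exact ih hv.2

/-- Far commutation and Yang-Baxter. -/
theorem L_main (r : ι → ι → M)
    (hfar : ∀ a b c d, a ≠ b → c ≠ d → a ≠ c → a ≠ d → b ≠ c → b ≠ d → Commute (r a b) (r c d))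
    (hyb : ∀ a b c, a ≠ b → a ≠ c → b ≠ c → r a b * r a c * r b c = r b c * r a c * r a b)
    (A B C : Finset ι) (hAB : Disjoint A B) (hAC : Disjoint A C) (hBC : Disjoint B C)
    (v : List ι) (hv : v.Nodup) :
    XX r (A ∪ B) C v * XX r A B v = XX r A (B ∪ C) v * XX r B C v := by
  have hab : ∀ x ∈ A, ∀ y ∈ B, x ≠ y := fun x hx y hy => Finset.disjoint_iff_ne.mp hAB x hx y hy
  have hac : ∀ x ∈ A, ∀ y ∈ C, x ≠ y := fun x hx y hy => Finset.disjoint_iff_ne.mp hAC x hx y hy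
  have hbc : ∀ x ∈ B, ∀ y ∈ C, x ≠ y := fun x hx y hy => Finset.disjoint_iff_ne.mp hBC x hx y hy
  induction v with
  | nil => simp [XX]
  | cons p v ih =>
    rw [List.nodup_cons] at hv
    have ih' := ih hv.2
    have hne : ∀ x ∈ v, x ≠ p := by rintro x hx rfl; exact hv.1 hx
    have hcomm : p ∈ B ∪ C → Commute (Sx (fun x => r x p) A v) (XX r B C v) := fun hp =>
      comm_XX _ _ _ _ _ fun x hx y hy hxB hyC => (comm_Sx _ _ _ _ fun z hz hzA =>
        hfar _ _ _ _ (hbc x hxB y hyC) (hne z hz) (hab z hzA x hxB).symm (hne x hx)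
          (hac z hzA y hyC).symm (hne y hy)).symm
    unfold XX
    by_cases hb : p ∈ B
    · have hc : p ∉ C := fun h => hbc p hb p h rfl
      have hu : p ∈ B ∪ C := Finset.mem_union_left _ hb
      simp only [hb, hc, hu, if_true, if_false]
      rw [← mul_assoc, ih', mul_assoc, ← (hcomm hu).eq, mul_assoc]
    · by_cases hc : p ∈ C
      · have hu : p ∈ B ∪ C := Finset.mem_union_right _ hc
        simp only [hb, hc, hu, if_true, if_false]
        have hpu : ∀ x ∈ A ∪ B, x ≠ p := by
          intro x hx
          rcases Finset.mem_union.mp hx with h | h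
          · exact hac x h p hc
          · exact hbc x h p hc
        have hG := G_main r (fun x => r x p) A B hAB v hv.2
          (fun x hx q hq => (hyb x q p (hab x hx q hq) (hac x hx p hc) (hbc q hq p hc)).symm)
          (fun x hx y hy z hz hzx hzy => hfar _ _ _ _ (hpu z hz) (hab x hx y hy) hzx hzy
            (hac x hx p hc).symm (hbc y hy p hc).symm)
        rw [mul_assoc, hG]
        calc _ = (XX r (A ∪ B) C v * XX r A B v) * Sx (fun x => r x p) A v *
                    Sx (fun x => r x p) B v := by simp only [mul_assoc]
          _ = XX r A (B ∪ C) v * (XX r B C v * Sx (fun x => r x p) A v) *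
                    Sx (fun x => r x p) B v := by rw [ih']; simp only [mul_assoc]
          _ = _ := by rw [← (hcomm hu).eq]; simp only [mul_assoc]
      · have hu : p ∉ B ∪ C := by simp [hb, hc]
        simp only [hb, hc, hu, if_false]
        exact ih'

theorem L_main_op (r : ι → ι → M)
    (hfar : ∀ a b c d, a ≠ b → c ≠ d → a ≠ c → a ≠ d → b ≠ c → b ≠ d → Commute (r a b) (r c d))
    (hyb : ∀ a b c, a ≠ b → a ≠ c → b ≠ c → r a b * r a c * r b c = r b c * r a c * r a b)
    (A B C : Finset ι) (hAB : Disjoint A B) (hAC : Disjoint A C) (hBC : Disjoint B C)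
    (v : List ι) (hv : v.Nodup) :
    YY r A B v * YY r (A ∪ B) C v = YY r B C v * YY r A (B ∪ C) v := by
  have h := L_main (fun x y => MulOpposite.op (r x y))
    (fun a b c d h1 h2 h3 h4 h5 h6 => (hfar a b c d h1 h2 h3 h4 h5 h6).op)
    (fun a b c h1 h2 h3 => by
      simp only [← MulOpposite.op_mul]
      rw [← mul_assoc, ← mul_assoc, hyb a b c h1 h2 h3])
    A B C hAB hAC hBC v hv
  simp only [op_XX, ← MulOpposite.op_mul] at h
  exact MulOpposite.op_injective h

theorem H_main_op (r : ι → ι → M) (s : ι → M) (P Q : Finset ι) (hPQ : Disjoint P Q) (v : List ι)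
    (hv : v.Nodup)
    (hs : ∀ x ∈ P, ∀ q ∈ Q, s x * s q * r x q = r x q * s q * s x)
    (hc : ∀ x ∈ P, ∀ y ∈ Q, ∀ z ∈ P ∪ Q, z ≠ x → z ≠ y → Commute (s z) (r x y)) :
    YY r P Q v * Sx s (P ∪ Q) v = Sx s P v * Sx s Q v * YY r P Q v := by
  have h := H_main (fun x y => MulOpposite.op (r x y)) (fun x => MulOpposite.op (s x)) P Q hPQ v hv
    (fun x hx q hq => by
      simp only [← MulOpposite.op_mul]
      rw [← mul_assoc, ← mul_assoc, hs x hx q hq])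
    (fun x hx y hy z hz h1 h2 => (hc x hx y hy z hz h1 h2).op)
  simp only [op_XX, op_Sr, ← MulOpposite.op_mul] at h
  rw [MulOpposite.op_injective h, mul_assoc]

theorem Sx_append (s : ι → M) (P : Finset ι) (v w : List ι) :
    Sx s P (v ++ w) = Sx s P v * Sx s P w := by
  induction v with
  | nil => simp [Sx]
  | cons p v ih => simp only [List.cons_append, Sx]; split_ifs <;> simp [ih, mul_assoc]

theorem Sx_reverse (s : ι → M) (P : Finset ι) (v : List ι) :
    Sx s P v.reverse = Sr s P v := by
  induction v with
  | nil => simp [Sx, Sr]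
  | cons p v ih => simp only [List.reverse_cons, Sx_append, ih, Sx, Sr]; split_ifs <;> simp

theorem Sx_eq (s : ι → M) (P : Finset ι) (v : List ι) :
    Sx s P v = ((v.filter (· ∈ P)).map s).prod := by
  induction v with
  | nil => simp [Sx]
  | cons p v ih => simp only [Sx, List.filter_cons]; split_ifs <;> simp_all

theorem Sr_eq (s : ι → M) (P : Finset ι) (v : List ι) :
    Sr s P v = ((v.filter (· ∈ P)).reverse.map s).prod := by
  rw [← Sx_reverse, Sx_eq, List.filter_reverse]

theorem Sx_mul (f g : ι → M) (P : Finset ι) (v : List ι) (hv : v.Nodup)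
    (h : ∀ x ∈ P, ∀ y ∈ P, x ≠ y → Commute (g x) (f y)) :
    Sx (fun x => f x * g x) P v = Sx f P v * Sx g P v := by
  induction v with
  | nil => simp [Sx]
  | cons p v ih =>
    rw [List.nodup_cons] at hv
    unfold Sx
    split_ifs with hp
    · have : Commute (g p) (Sx f P v) := comm_Sx _ _ _ _ fun x hx hxP =>
        h p hp x hxP (by rintro rfl; exact hv.1 hx)
      rw [ih hv.2, mul_assoc, ← mul_assoc (g p), this.eq]; simp only [mul_assoc]
    · exact ih hv.2

theorem Sx_congr (f g : ι → M) (P : Finset ι) (v : List ι) (h : ∀ x ∈ P, f x = g x) :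
    Sx f P v = Sx g P v := by
  induction v with
  | nil => rfl
  | cons p v ih =>
    unfold Sx
    split_ifs with hp
    · rw [ih, h p hp]
    · exact ih

theorem Sx_conj (z : M) (f g : ι → M) (P : Finset ι) (v : List ι) (h : ∀ x ∈ P, z * f x = g x * z) :
    z * Sx f P v = Sx g P v * z := by
  induction v with
  | nil => simp [Sx]
  | cons p v ih =>
    unfold Sx
    split_ifs with hp
    · rw [← mul_assoc, h p hp, mul_assoc, ih, mul_assoc]
    · exact ih

/-- Exchange of double products. -/
theorem Sx_exch (t : ι → ι → M) (P Q : Finset ι) (v w : List ι) (hv : v.Nodup) (hw : w.Nodup)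
    (hfar : ∀ a ∈ P, ∀ b ∈ Q, ∀ c ∈ P, ∀ d ∈ Q, a ≠ c → b ≠ d → Commute (t a b) (t c d)) :
    Sx (fun a => Sx (t a) Q w) P v = Sx (fun c => Sx (fun a => t a c) P v) Q w := by
  induction v with
  | nil =>
    induction w with
    | nil => rfl
    | cons q w ih => 
      simp only [Sx] at ih ⊢
      split_ifs <;> simp [← ih (List.nodup_cons.mp hw).2]
  | cons p v ih =>
    rw [List.nodup_cons] at hv
    by_cases hp : p ∈ P
    · simp only [Sx, hp, if_true]
      rw [ih hv.2, Sx_mul _ _ _ _ hw]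
      intro x hx y hy hxy
      refine (comm_Sx _ _ _ _ fun z hz hzP => ?_).symm
      exact (hfar z hzP x hx p hp y hy (by rintro rfl; exact hv.1 hz) hxy).symm
    · simp only [Sx, hp, if_false]
      exact ih hv.2

/-- `∏ t` with rows ascending, columns descending. -/
def TT (t : ι → ι → M) (P Q : Finset ι) (w : List ι) : M :=
  Sx (fun a => Sx (t a) Q w.reverse) P w

theorem comm_TT (z : M) (r : ι → ι → M) (P Q : Finset ι) (v : List ι)
    (h : ∀ x ∈ P, ∀ y ∈ Q, Commute z (r x y)) : Commute z (TT r P Q v) :=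
  comm_Sx _ _ _ _ fun x _ hxP => comm_Sx _ _ _ _ fun y _ hyP => h x hxP y hyP

theorem T_one (r t : ι → ι → M) (A B C : Finset ι)
    (hAB : Disjoint A B) (hAC : Disjoint A C) (hBC : Disjoint B C)
    (htt : ∀ a b c d, a ≠ b → c ≠ d → a ≠ c → a ≠ d → b ≠ c → b ≠ d → Commute (t a b) (t c d))
    (htr : ∀ a b c d, a ≠ b → c ≠ d → a ≠ c → a ≠ d → b ≠ c → b ≠ d → Commute (t a b) (r c d))
    (hm1 : ∀ c x q, c ≠ x → c ≠ q → x ≠ q → t x c * t q c * r x q = r x q * t q c * t x c)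
    (w : List ι) (hw : w.Nodup) :
    YY r A B w * TT t (A ∪ B) C w = TT t A C w * TT t B C w * YY r A B w := by
  have hab : ∀ x ∈ A, ∀ y ∈ B, x ≠ y := fun x hx y hy => Finset.disjoint_iff_ne.mp hAB x hx y hy
  have hac : ∀ x ∈ A, ∀ y ∈ C, x ≠ y := fun x hx y hy => Finset.disjoint_iff_ne.mp hAC x hx y hy
  have hbc : ∀ x ∈ B, ∀ y ∈ C, x ≠ y := fun x hx y hy => Finset.disjoint_iff_ne.mp hBC x hx y hy
  have hdc : ∀ x ∈ A ∪ B, ∀ y ∈ C, x ≠ y := by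
    intro x hx
    rcases Finset.mem_union.mp hx with h | h
    · exact hac x h
    · exact hbc x h
  have hw' : w.reverse.Nodup := List.nodup_reverse.mpr hw
  unfold TT
  rw [Sx_exch t (A ∪ B) C _ _ hw hw' (fun a ha b hb c hc d hd h1 h2 =>
      htt _ _ _ _ (hdc a ha b hb) (hdc c hc d hd) h1 (hdc a ha d hd) (hdc c hc b hb).symm h2),
    Sx_exch t A C _ _ hw hw' (fun a ha b hb c hc d hd h1 h2 =>
      htt _ _ _ _ (hac a ha b hb) (hac c hc d hd) h1 (hac a ha d hd) (hac c hc b hb).symm h2),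
    Sx_exch t B C _ _ hw hw' (fun a ha b hb c hc d hd h1 h2 =>
      htt _ _ _ _ (hbc a ha b hb) (hbc c hc d hd) h1 (hbc a ha d hd) (hbc c hc b hb).symm h2)]
  rw [← Sx_mul _ _ _ _ hw']
  · apply Sx_conj
    intro c hc
    exact H_main_op r (fun a => t a c) A B hAB w hw
      (fun x hx q hq => hm1 c x q (hac x hx c hc).symm (hbc q hq c hc).symm (hab x hx q hq))
      (fun x hx y hy z hz h1 h2 => htr _ _ _ _ (hdc z hz c hc) (hab x hx y hy) h1 h2
        (hac x hx c hc).symm (hbc y hy c hc).symm)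
  · intro x hx y hy hxy
    exact comm_Sx _ _ _ _ fun b _ hb => (comm_Sx _ _ _ _ fun a _ ha =>
      htt _ _ _ _ (hac b hb y hy) (hbc a ha x hx) (hab b hb a ha) (hac b hb x hx)
        (hbc a ha y hy).symm hxy.symm).symm

theorem T_two (r t : ι → ι → M) (A B C : Finset ι)
    (hAB : Disjoint A B) (hAC : Disjoint A C) (hBC : Disjoint B C)
    (htt : ∀ a b c d, a ≠ b → c ≠ d → a ≠ c → a ≠ d → b ≠ c → b ≠ d → Commute (t a b) (t c d))
    (htr : ∀ a b c d, a ≠ b → c ≠ d → a ≠ c → a ≠ d → b ≠ c → b ≠ d → Commute (t a b) (r c d))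
    (hm2 : ∀ x q a, x ≠ q → x ≠ a → q ≠ a → r x q * t a x * t a q = t a q * t a x * r x q)
    (w : List ι) (hw : w.Nodup) :
    TT t A (B ∪ C) w * XX r B C w.reverse = XX r B C w.reverse * TT t A B w * TT t A C w := by
  have hab : ∀ x ∈ A, ∀ y ∈ B, x ≠ y := fun x hx y hy => Finset.disjoint_iff_ne.mp hAB x hx y hy
  have hac : ∀ x ∈ A, ∀ y ∈ C, x ≠ y := fun x hx y hy => Finset.disjoint_iff_ne.mp hAC x hx y hy
  have hbc : ∀ x ∈ B, ∀ y ∈ C, x ≠ y := fun x hx y hy => Finset.disjoint_iff_ne.mp hBC x hx y hy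
  have hae : ∀ x ∈ A, ∀ y ∈ B ∪ C, x ≠ y := by
    intro x hx y hy
    rcases Finset.mem_union.mp hy with h | h
    · exact hab x hx y h
    · exact hac x hx y h
  have hw' : w.reverse.Nodup := List.nodup_reverse.mpr hw
  unfold TT
  rw [mul_assoc, ← Sx_mul _ _ _ _ hw]
  · symm
    apply Sx_conj
    intro a ha
    rw [← mul_assoc]
    symm
    exact G_main r (t a) B C hBC _ hw'
      (fun x hx q hq => (hm2 x q a (hbc x hx q hq) (hab a ha x hx).symm (hac a ha q hq).symm).symm)
      (fun x hx y hy z hz h1 h2 => htr _ _ _ _ (hae a ha z hz) (hbc x hx y hy)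
        (hab a ha x hx) (hac a ha y hy) h1 h2)
  · intro x hx y hy hxy
    exact comm_Sx _ _ _ _ fun b _ hb => (comm_Sx _ _ _ _ fun c _ hc =>
      htt _ _ _ _ (hab y hy b hb) (hac x hx c hc) hxy.symm (hac y hy c hc) (hab x hx b hb).symm
        (hbc b hb c hc)).symm

end Abs
section Emb
variable {K : Type*} [Field K] {n : ℕ}

theorem embed_apply {k N : ℕ} (ι : Fin k → Fin N) (X : Matrix (Idx n k) (Idx n k) K)
    (f g : Idx n N) :
    embed ι X f g = X (f ∘ ι) (g ∘ ι) * if (∀ b, b ∉ Set.range ι → f b = g b) then 1 else 0 := by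
  unfold embed
  congr 1
  split_ifs with h
  · apply Finset.prod_eq_one
    intro b _
    split_ifs with h1 h2
    · rfl
    · rfl
    · exact absurd (h b (by simpa using h1)) h2
  · push Not at h
    obtain ⟨b, hb, hb'⟩ := h
    apply Finset.prod_eq_zero (Finset.mem_univ b)
    rw [if_neg (by simpa using hb), if_neg hb']

theorem embed_zero {k N : ℕ} (ι : Fin k → Fin N) :
    embed ι (0 : Matrix (Idx n k) (Idx n k) K) = 0 := by
  ext f g; simp [embed_apply]

theorem embed_add {k N : ℕ} (ι : Fin k → Fin N) (X Y : Matrix (Idx n k) (Idx n k) K) :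
    embed ι (X + Y) = embed ι X + embed ι Y := by
  ext f g; simp only [embed_apply, Matrix.add_apply, add_mul]

theorem embed_sum {α : Type*} {k N : ℕ} (ι : Fin k → Fin N) (s : Finset α)
    (X : α → Matrix (Idx n k) (Idx n k) K) :
    embed ι (∑ i ∈ s, X i) = ∑ i ∈ s, embed ι (X i) := by
  classical
  induction s using Finset.induction_on with
  | empty => simp [embed_zero]
  | insert a s ha ih => rw [Finset.sum_insert ha, Finset.sum_insert ha, embed_add, ih]

theorem embed_one {k N : ℕ} (ι : Fin k → Fin N) :
    embed ι (1 : Matrix (Idx n k) (Idx n k) K) = 1 := by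
  ext f g
  rw [embed_apply, Matrix.one_apply, Matrix.one_apply]
  by_cases h : f = g
  · subst h; simp
  · rw [if_neg h]
    by_cases h1 : f ∘ ι = g ∘ ι
    · rw [if_pos h1, if_neg, mul_zero]
      intro h2
      apply h
      ext1 b
      by_cases hb : b ∈ Set.range ι
      · obtain ⟨i, rfl⟩ := hb
        exact congrFun h1 i
      · exact h2 b hb
    · rw [if_neg h1, zero_mul]

theorem embed_embed {k m N : ℕ} (ι : Fin m → Fin N) (hι : Function.Injective ι) (κ : Fin k → Fin m)
    (X : Matrix (Idx n k) (Idx n k) K) : embed ι (embed κ X) = embed (ι ∘ κ) X := by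
  ext f g
  rw [embed_apply, embed_apply, embed_apply, mul_assoc]
  congr 1
  rw [ite_zero_mul_ite_zero, mul_one]
  congr 1
  apply propext
  constructor
  · rintro ⟨h1, h2⟩ b hb
    by_cases hb' : b ∈ Set.range ι
    · obtain ⟨i, rfl⟩ := hb'
      apply h1 i
      rintro ⟨j, rfl⟩
      exact hb ⟨j, rfl⟩
    · exact h2 b hb'
  · intro h
    constructor
    · intro b hb
      apply h
      rintro ⟨j, hj⟩
      exact hb ⟨j, hι hj⟩
    · intro b hb
      apply h
      rintro ⟨j, rfl⟩
      exact hb ⟨κ j, rfl⟩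

theorem embed_mul {k N : ℕ} (ι : Fin k → Fin N) (hι : Function.Injective ι)
    (X Y : Matrix (Idx n k) (Idx n k) K) : embed ι (X * Y) = embed ι X * embed ι Y := by
  classical
  ext f g
  rw [Matrix.mul_apply, embed_apply, Matrix.mul_apply, Finset.sum_mul]
  -- extension of an index
  let ext' : Idx n k → Idx n N := fun u b => if h : ∃ i, ι i = b then u h.choose else f b
  have hext1 : ∀ u, ext' u ∘ ι = u := by
    intro u
    ext1 i
    have h : ∃ j, ι j = ι i := ⟨i, rfl⟩
    simp only [Function.comp, ext', dif_pos h]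
    rw [hι h.choose_spec]
  have hext2 : ∀ u b, b ∉ Set.range ι → ext' u b = f b := by
    intro u b hb
    exact dif_neg hb
  have hinj : Function.Injective ext' := fun u v h => by rw [← hext1 u, ← hext1 v, h]
  rw [← Finset.sum_subset (Finset.subset_univ (Finset.univ.image ext'))]
  · rw [Finset.sum_image (fun _ _ _ _ h => hinj h)]
    apply Finset.sum_congr rfl
    intro u _
    rw [embed_apply, embed_apply, hext1]
    rw [if_pos (fun b hb => (hext2 u b hb).symm), mul_one, ← mul_assoc]
    congr 2
    apply propext
    constructor
    · intro h b hb; rw [hext2 u b hb, h b hb]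
    · intro h b hb; rw [← h b hb, hext2 u b hb]
  · intro h _ hh
    rw [embed_apply, if_neg, mul_zero, zero_mul]
    intro h2
    apply hh
    simp only [Finset.mem_image, Finset.mem_univ, true_and]
    refine ⟨h ∘ ι, ?_⟩
    ext1 b
    by_cases hb : b ∈ Set.range ι
    · obtain ⟨i, rfl⟩ := hb
      exact congrFun (hext1 (h ∘ ι)) i
    · rw [hext2 _ b hb, h2 b hb]

theorem embed_mul_disj {k l N : ℕ} (ι : Fin k → Fin N) (κ : Fin l → Fin N)
    (hd : ∀ i j, ι i ≠ κ j)
    (X : Matrix (Idx n k) (Idx n k) K) (Y : Matrix (Idx n l) (Idx n l) K) (f g : Idx n N) :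
    (embed ι X * embed κ Y) f g = X (f ∘ ι) (g ∘ ι) * Y (f ∘ κ) (g ∘ κ) *
      if (∀ b, b ∉ Set.range ι → b ∉ Set.range κ → f b = g b) then 1 else 0 := by
  classical
  rw [Matrix.mul_apply]
  let h0 : Idx n N := fun b => if b ∈ Set.range ι then g b else f b
  have h01 : h0 ∘ ι = g ∘ ι := by
    ext1 i; simp [h0]
  have h02 : h0 ∘ κ = f ∘ κ := by
    ext1 i
    have : κ i ∉ Set.range ι := by rintro ⟨j, hj⟩; exact hd j i hj
    simp only [Function.comp, h0, if_neg this]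
  rw [Finset.sum_eq_single h0]
  · rw [embed_apply, embed_apply, h01, h02, if_pos, mul_one, mul_assoc]
    · congr 3
      apply propext
      constructor
      · intro h b hb hb'
        have := h b hb'
        simpa only [h0, if_neg hb] using this
      · intro h b hb'
        by_cases hb : b ∈ Set.range ι
        · simp only [h0, if_pos hb]
        · simp only [h0, if_neg hb]; exact h b hb hb'
    · intro b hb; simp only [h0, if_neg hb]
  · intro h _ hh
    rw [embed_apply, embed_apply]
    by_cases h1 : ∀ b, b ∉ Set.range ι → f b = h b
    · by_cases h2 : ∀ b, b ∉ Set.range κ → h b = g b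
      · exfalso
        apply hh
        ext1 b
        by_cases hb : b ∈ Set.range ι
        · simp only [h0, if_pos hb]
          apply h2
          obtain ⟨i, rfl⟩ := hb
          rintro ⟨j, hj⟩
          exact hd i j hj.symm
        · simp only [h0, if_neg hb]; exact (h1 b hb).symm
      · rw [if_neg h2, mul_zero, mul_zero]
    · rw [if_neg h1, mul_zero, zero_mul]
  · intro h; exact absurd (Finset.mem_univ _) h

theorem embed_commute {k l N : ℕ} (ι : Fin k → Fin N) (κ : Fin l → Fin N)
    (hd : ∀ i j, ι i ≠ κ j)
    (X : Matrix (Idx n k) (Idx n k) K) (Y : Matrix (Idx n l) (Idx n l) K) :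
    Commute (embed ι X) (embed κ Y) := by
  ext f g
  rw [embed_mul_disj ι κ hd, embed_mul_disj κ ι (fun i j => (hd j i).symm), mul_comm (X _ _)]
  congr 2
  apply propext
  exact ⟨fun h b h1 h2 => h b h2 h1, fun h b h1 h2 => h b h2 h1⟩

/-- Two-site operator. -/
def op2 {N : ℕ} (R : Matrix (Idx n 2) (Idx n 2) K) (a b : Fin N) :
    Matrix (Idx n N) (Idx n N) K := embed ![a, b] R

theorem op2_far {N : ℕ} (R S : Matrix (Idx n 2) (Idx n 2) K) (a b c d : Fin N)
    (h1 : a ≠ c) (h2 : a ≠ d) (h3 : b ≠ c) (h4 : b ≠ d) : Commute (op2 R a b) (op2 S c d) := by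
  apply embed_commute
  intro i j
  fin_cases i <;> fin_cases j <;> simpa

theorem op2_lift {N : ℕ} (R : Matrix (Idx n 2) (Idx n 2) K) (a b c : Fin N)
    (h1 : a ≠ b) (h2 : a ≠ c) (h3 : b ≠ c) (i j : Fin 3) :
    embed ![a, b, c] (embed (![i, j] : Fin 2 → Fin 3) R) = op2 R (![a, b, c] i) (![a, b, c] j) := by
  rw [embed_embed, op2]
  · congr 1
    ext1 k; fin_cases k <;> rfl
  · intro x y; fin_cases x <;> fin_cases y <;> simp [h1, h2, h3, h1.symm, h2.symm, h3.symm]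

theorem inj3 {N : ℕ} (a b c : Fin N)
    (h1 : a ≠ b) (h2 : a ≠ c) (h3 : b ≠ c) : Function.Injective ![a, b, c] := by
  intro x y; fin_cases x <;> fin_cases y <;> simp [h1, h2, h3, h1.symm, h2.symm, h3.symm]

theorem op2_rel {N : ℕ} (R S T R' S' T' : Matrix (Idx n 2) (Idx n 2) K)
    (i j k l p q i' j' k' l' p' q' : Fin 3)
    (h : embed (![i, j] : Fin 2 → Fin 3) R * embed (![k, l] : Fin 2 → Fin 3) S *
        embed (![p, q] : Fin 2 → Fin 3) T =
      embed (![i', j'] : Fin 2 → Fin 3) R' * embed (![k', l'] : Fin 2 → Fin 3) S' *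
        embed (![p', q'] : Fin 2 → Fin 3) T') (a b c : Fin N)
    (h1 : a ≠ b) (h2 : a ≠ c) (h3 : b ≠ c) :
    let e := ![a, b, c]
    op2 R (e i) (e j) * op2 S (e k) (e l) * op2 T (e p) (e q) =
    op2 R' (e i') (e j') * op2 S' (e k') (e l') * op2 T' (e p') (e q') := by
  have h' := congrArg (embed ![a, b, c]) h
  have hi := inj3 a b c h1 h2 h3
  simp only [embed_mul _ hi, op2_lift _ a b c h1 h2 h3] at h'
  exact h'

theorem embed_list_prod {k N : ℕ} (ι : Fin k → Fin N) (hι : Function.Injective ι)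
    (l : List (Matrix (Idx n k) (Idx n k) K)) : embed ι l.prod = (l.map (embed ι)).prod := by
  induction l with
  | nil => simp [embed_one]
  | cons a l ih => simp [embed_mul _ hι, ih]

theorem comp_pair {m N : ℕ} (ι : Fin m → Fin N) (a b : Fin m) : ι ∘ ![a, b] = ![ι a, ι b] := by
  ext1 k; fin_cases k <;> rfl

variable (R Rt : Matrix (Idx n 2) (Idx n 2) K)

theorem embed_prodRlt {k l m N : ℕ} (ι : Fin m → Fin N) (hι : StrictMono ι) (a : Fin k → Fin m)
    (b : Fin l → Fin m) : embed ι (prodRlt R a b) = prodRlt R (ι ∘ a) (ι ∘ b) := by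
  unfold prodRlt
  simp only [embed_list_prod ι hι.injective, List.map_map, Function.comp_def]
  simp only [apply_ite (embed ι), embed_one, embed_embed ι hι.injective, comp_pair, hι.lt_iff_lt]

theorem embed_prodRgt {k l m N : ℕ} (ι : Fin m → Fin N) (hι : StrictMono ι) (a : Fin k → Fin m)
    (b : Fin l → Fin m) : embed ι (prodRgt R a b) = prodRgt R (ι ∘ a) (ι ∘ b) := by
  unfold prodRgt
  simp only [embed_list_prod ι hι.injective, List.map_map, Function.comp_def]
  simp only [apply_ite (embed ι), embed_one, embed_embed ι hι.injective, comp_pair, hι.lt_iff_lt]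

theorem embed_prodRt {k l m N : ℕ} (ι : Fin m → Fin N) (hι : StrictMono ι) (a : Fin k → Fin m)
    (b : Fin l → Fin m) : embed ι (prodRt Rt a b) = prodRt Rt (ι ∘ a) (ι ∘ b) := by
  unfold prodRt
  simp only [embed_list_prod ι hι.injective, List.map_map, Function.comp_def]
  simp only [embed_embed ι hι.injective, comp_pair]

theorem map_finRange {k N : ℕ} (a : Fin k → Fin N) (ha : StrictMono a) (U : Finset (Fin N))
    (hU : ∀ x, x ∈ U ↔ ∃ i, a i = x) :
    (List.finRange k).map a = (List.finRange N).filter (· ∈ U) := by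
  have h1 : ((List.finRange k).map a).Pairwise (· < ·) :=
    List.pairwise_map.mpr ((List.sortedLT_finRange k).pairwise.imp fun h => ha h)
  have h2 : ((List.finRange N).filter (· ∈ U)).Pairwise (· < ·) :=
    (List.sortedLT_finRange N).pairwise.filter _
  have hp : ((List.finRange k).map a).Perm ((List.finRange N).filter (· ∈ U)) := by
    rw [List.perm_ext_iff_of_nodup (h1.imp fun h => h.ne) (h2.imp fun h => h.ne)]
    intro x
    simp [hU]
  exact List.Perm.eq_of_sortedLE (h1.imp fun h => h.le).sortedLE (h2.imp fun h => h.le).sortedLE hp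

theorem Sx_congr_mem {ι M : Type*} [DecidableEq ι] [Monoid M] (f g : ι → M) (P : Finset ι)
    (v : List ι) (h : ∀ x ∈ v, f x = g x) : Sx f P v = Sx g P v := by
  induction v with
  | nil => rfl
  | cons p v ih =>
    have ih' := ih fun x hx => h x (List.mem_cons_of_mem _ hx)
    unfold Sx
    rw [ih', h p List.mem_cons_self]

theorem XX_eq {ι M : Type*} [LinearOrder ι] [Monoid M] (r : ι → ι → M) (P Q : Finset ι)
    (v : List ι) (hv : v.Pairwise (· > ·)) :
    Sr (fun y => Sx (fun x => if x < y then r x y else 1) P v) Q v = XX r P Q v := by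
  induction v with
  | nil => rfl
  | cons p v ih =>
    rw [List.pairwise_cons] at hv
    have ih' := ih hv.2
    have h1 : Sr (fun y => Sx (fun x => if x < y then r x y else 1) P (p :: v)) Q v =
        Sr (fun y => Sx (fun x => if x < y then r x y else 1) P v) Q v := by
      rw [← Sx_reverse, ← Sx_reverse]
      apply Sx_congr_mem
      intro y hy
      rw [List.mem_reverse] at hy
      have : ¬ p < y := not_lt.mpr (hv.1 y hy).le
      simp [Sx, this]
    have h2 : Sx (fun x => if x < p then r x p else 1) P (p :: v) = Sx (fun x => r x p) P v := by
      simp only [Sx, lt_irrefl, if_false, one_mul, ite_self]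
      apply Sx_congr_mem
      intro x hx
      rw [if_pos (hv.1 x hx)]
    conv_lhs => rw [Sr]
    rw [XX, h1, h2, ih']

theorem YY_eq {ι M : Type*} [LinearOrder ι] [Monoid M] (r : ι → ι → M) (P Q : Finset ι)
    (v : List ι) (hv : v.Pairwise (· < ·)) :
    Sx (fun y => Sr (fun x => if y < x then r x y else 1) P v) Q v = YY r P Q v := by
  induction v with
  | nil => rfl
  | cons p v ih =>
    rw [List.pairwise_cons] at hv
    have ih' := ih hv.2
    have h1 : Sx (fun y => Sr (fun x => if y < x then r x y else 1) P (p :: v)) Q v =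
        Sx (fun y => Sr (fun x => if y < x then r x y else 1) P v) Q v := by
      apply Sx_congr_mem
      intro y hy
      have : ¬ y < p := not_lt.mpr (hv.1 y hy).le
      simp [Sr, this]
    have h2 : Sr (fun x => if p < x then r x p else 1) P (p :: v) = Sr (fun x => r x p) P v := by
      simp only [Sr, lt_irrefl, if_false, mul_one, ite_self]
      rw [← Sx_reverse, ← Sx_reverse]
      apply Sx_congr_mem
      intro x hx
      rw [if_pos (hv.1 x (List.mem_reverse.mp hx))]
    conv_lhs => rw [Sx]
    rw [YY, h1, h2, ih']

theorem prodRlt_eq {k l N : ℕ} (a : Fin k → Fin N) (ha : StrictMono a) (b : Fin l → Fin N)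
    (hb : StrictMono b) (U V : Finset (Fin N)) (hU : ∀ x, x ∈ U ↔ ∃ i, a i = x)
    (hV : ∀ x, x ∈ V ↔ ∃ i, b i = x) :
    prodRlt R a b = XX (op2 R) U V (List.finRange N).reverse := by
  rw [← XX_eq _ _ _ _ (List.pairwise_reverse.mpr (List.sortedLT_finRange N).pairwise), ← Sx_reverse,
    List.reverse_reverse, Sx_eq, ← map_finRange b hb V hV, List.map_map]
  unfold prodRlt
  congr 2
  ext1 j
  simp only [Function.comp]
  rw [Sx_reverse, Sr_eq, ← map_finRange a ha U hU, ← List.map_reverse, List.map_map]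
  rfl

theorem prodRgt_eq {k l N : ℕ} (a : Fin k → Fin N) (ha : StrictMono a) (b : Fin l → Fin N)
    (hb : StrictMono b) (U V : Finset (Fin N)) (hU : ∀ x, x ∈ U ↔ ∃ i, a i = x)
    (hV : ∀ x, x ∈ V ↔ ∃ i, b i = x) :
    prodRgt R a b = YY (op2 R) U V (List.finRange N) := by
  rw [← YY_eq _ _ _ _ (List.sortedLT_finRange N).pairwise,
    Sx_eq, ← map_finRange b hb V hV, List.map_map]
  unfold prodRgt
  congr 2
  ext1 j
  simp only [Function.comp]
  rw [Sr_eq, ← map_finRange a ha U hU, ← List.map_reverse, List.map_map]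
  rfl

theorem prodRt_eq {k l N : ℕ} (a : Fin k → Fin N) (ha : StrictMono a) (b : Fin l → Fin N)
    (hb : StrictMono b) (U V : Finset (Fin N)) (hU : ∀ x, x ∈ U ↔ ∃ i, a i = x)
    (hV : ∀ x, x ∈ V ↔ ∃ i, b i = x) :
    prodRt Rt a b = TT (op2 Rt) U V (List.finRange N) := by
  unfold TT
  rw [Sx_eq, ← map_finRange a ha U hU, List.map_map]
  unfold prodRt
  congr 2
  ext1 j
  simp only [Function.comp]
  rw [Sx_reverse, Sr_eq, ← map_finRange b hb V hV, ← List.map_reverse, List.map_map]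
  rfl

end Emb
section Main
variable {K : Type*} [Field K] {n : ℕ}
variable (R Rt : Matrix (Idx n 2) (Idx n 2) K)

/-- `x_S`. -/
def embS {N : ℕ} (S : Finset (Fin N)) (x : GA n K) : Matrix (Idx n N) (Idx n N) K :=
  embed (S.orderEmbOfFin rfl) (x S.card)

/-- One summand of the shuffle product. -/
def shTerm {N : ℕ} (A B : Matrix (Idx n N) (Idx n N) K) (U V : Finset (Fin N)) :
    Matrix (Idx n N) (Idx n N) K :=
  XX (op2 R) U V (List.finRange N).reverse * A * TT (op2 Rt) U V (List.finRange N) * B *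
    YY (op2 R) U V (List.finRange N)

theorem embS_eq {k N : ℕ} (a : Fin k → Fin N) (ha : StrictMono a) (U : Finset (Fin N))
    (hU : ∀ x, x ∈ U ↔ ∃ i, a i = x) (x : GA n K) : embed a (x k) = embS U x := by
  have hU' : U = Finset.univ.map ⟨a, ha.injective⟩ := by ext y; simp [hU]
  have hk : U.card = k := by rw [hU']; simp
  subst hk
  unfold embS
  rw [← Finset.orderEmbOfFin_unique rfl (fun i => (hU _).mpr ⟨i, rfl⟩) ha]

theorem shTerm_eq {k l N : ℕ} (a : Fin k → Fin N) (ha : StrictMono a) (b : Fin l → Fin N)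
    (hb : StrictMono b) (U V : Finset (Fin N)) (hU : ∀ x, x ∈ U ↔ ∃ i, a i = x)
    (hV : ∀ x, x ∈ V ↔ ∃ i, b i = x) (x y : GA n K) :
    prodRlt R a b * embed a (x k) * prodRt Rt a b * embed b (y l) * prodRgt R a b =
      shTerm R Rt (embS U x) (embS V y) U V := by
  rw [prodRlt_eq R a ha b hb U V hU hV, prodRgt_eq R a ha b hb U V hU hV,
    prodRt_eq Rt a ha b hb U V hU hV, embS_eq a ha U hU, embS_eq b hb V hV]
  rfl

theorem mem_iff_orderEmb {N k : ℕ} (U : Finset (Fin N)) (h : U.card = k) (x : Fin N) :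
    x ∈ U ↔ ∃ i, U.orderEmbOfFin h i = x := by
  have := Finset.range_orderEmbOfFin U h
  rw [← Finset.mem_coe, ← this]; rfl

theorem shuf_eq {k l N : ℕ} (h : k + l = N) (x y : GA n K) :
    recast h (shufMul R Rt k l (x k) (y l)) =
      ∑ S ∈ (Finset.univ : Finset (Finset (Fin N))).filter (fun S => S.card = k),
        shTerm R Rt (embS S x) (embS Sᶜ y) S Sᶜ := by
  subst h
  unfold recast shufMul
  rw [Finset.sum_subtype (p := fun S : Finset (Fin (k + l)) => S.card = k) _ (by simp)]
  apply Finset.sum_congr rfl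
  intro s _
  exact shTerm_eq R Rt _ (OrderEmbedding.strictMono _) _ (OrderEmbedding.strictMono _) _ _
    (mem_iff_orderEmb _ _) (mem_iff_orderEmb _ _) x y

theorem gaMul_eq (x y : GA n K) (N : ℕ) :
    gaMul R Rt x y N = ∑ S : Finset (Fin N), shTerm R Rt (embS S x) (embS Sᶜ y) S Sᶜ := by
  unfold gaMul
  rw [Finset.sum_congr rfl (fun k _ => shuf_eq R Rt
    (by have := Finset.mem_range.mp k.2; omega) x y),
    Finset.sum_attach (Finset.range (N + 1)) (fun k =>
      ∑ S ∈ (Finset.univ : Finset (Finset (Fin N))).filter (fun S => S.card = k),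
        shTerm R Rt (embS S x) (embS Sᶜ y) S Sᶜ)]
  apply Finset.sum_fiberwise_of_maps_to
  intro S _
  have := Finset.card_le_univ S
  rw [Fintype.card_fin] at this
  exact Finset.mem_range.mpr (by omega)

theorem embed_shTerm {m N : ℕ} (ι : Fin m ↪o Fin N) (U V : Finset (Fin m)) (x y : GA n K) :
    embed ι (shTerm R Rt (embS U x) (embS V y) U V) =
      shTerm R Rt (embS (U.map ι.toEmbedding) x) (embS (V.map ι.toEmbedding) y)
        (U.map ι.toEmbedding) (V.map ι.toEmbedding) := by
  have hι : StrictMono ι := ι.strictMono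
  rw [← shTerm_eq R Rt (U.orderEmbOfFin rfl) (OrderEmbedding.strictMono _)
    (V.orderEmbOfFin rfl) (OrderEmbedding.strictMono _) U V
    (mem_iff_orderEmb _ _) (mem_iff_orderEmb _ _) x y]
  rw [← shTerm_eq R Rt (ι ∘ U.orderEmbOfFin rfl) (hι.comp (OrderEmbedding.strictMono _))
    (ι ∘ V.orderEmbOfFin rfl) (hι.comp (OrderEmbedding.strictMono _)) (U.map ι.toEmbedding)
    (V.map ι.toEmbedding)
    (by intro z; simp only [Finset.mem_map, mem_iff_orderEmb U rfl]; simp)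
    (by intro z; simp only [Finset.mem_map, mem_iff_orderEmb V rfl]; simp) x y]
  simp only [embed_mul _ hι.injective, embed_prodRlt R _ hι, embed_prodRgt R _ hι,
    embed_prodRt Rt _ hι, embed_embed _ hι.injective]

theorem embS_gaMul {N : ℕ} (S : Finset (Fin N)) (x y : GA n K) :
    embS S (gaMul R Rt x y) =
      ∑ U ∈ S.powerset, shTerm R Rt (embS U x) (embS (S \ U) y) U (S \ U) := by
  unfold embS
  rw [gaMul_eq, embed_sum]
  have hmem := mem_iff_orderEmb S rfl
  refine Finset.sum_bij (fun U _ => U.map (S.orderEmbOfFin rfl).toEmbedding) ?_ ?_ ?_ ?_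
  · intro U _
    rw [Finset.mem_powerset]
    intro z hz
    obtain ⟨i, _, rfl⟩ := Finset.mem_map.mp hz
    exact (hmem _).mpr ⟨i, rfl⟩
  · intro U _ V _ h
    exact Finset.map_injective _ h
  · intro V hV
    rw [Finset.mem_powerset] at hV
    refine ⟨Finset.univ.filter (fun i => S.orderEmbOfFin rfl i ∈ V), Finset.mem_univ _, ?_⟩
    ext z
    simp only [Finset.mem_map, Finset.mem_filter, Finset.mem_univ, true_and]
    constructor
    · rintro ⟨i, hi, rfl⟩; exact hi
    · intro hz
      obtain ⟨i, rfl⟩ := (hmem z).mp (hV hz)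
      exact ⟨i, hz, rfl⟩
  · intro U _
    rw [embed_shTerm]
    have : Uᶜ.map (S.orderEmbOfFin rfl).toEmbedding =
        S \ U.map (S.orderEmbOfFin rfl).toEmbedding := by
      ext z
      simp only [Finset.mem_map, Finset.mem_compl, Finset.mem_sdiff, hmem z]
      constructor
      · rintro ⟨i, hi, rfl⟩
        refine ⟨⟨i, rfl⟩, ?_⟩
        rintro ⟨j, hj, hji⟩
        exact hi ((S.orderEmbOfFin rfl).injective hji ▸ hj)
      · rintro ⟨⟨i, rfl⟩, h⟩
        exact ⟨i, fun hi => h ⟨i, hi, rfl⟩, rfl⟩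
    rw [this]
    rfl

theorem embS_comm_op2 {N : ℕ} (S : Finset (Fin N)) (x : GA n K)
    (T : Matrix (Idx n 2) (Idx n 2) K) (a b : Fin N) (ha : a ∉ S) (hb : b ∉ S) :
    Commute (embS S x) (op2 T a b) := by
  apply embed_commute
  intro i j h
  have := (mem_iff_orderEmb S rfl _).mpr ⟨i, rfl⟩
  rw [h] at this
  fin_cases j
  · exact ha this
  · exact hb this

theorem shTerm_assoc {N : ℕ}
    (hYBE : ∀ a b c : Fin N, a ≠ b → a ≠ c → b ≠ c →
      op2 R a b * op2 R a c * op2 R b c = op2 R b c * op2 R a c * op2 R a b)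
    (hM1 : ∀ c x q : Fin N, c ≠ x → c ≠ q → x ≠ q →
      op2 Rt x c * op2 Rt q c * op2 R x q = op2 R x q * op2 Rt q c * op2 Rt x c)
    (hM2 : ∀ x q a : Fin N, x ≠ q → x ≠ a → q ≠ a →
      op2 R x q * op2 Rt a x * op2 Rt a q = op2 Rt a q * op2 Rt a x * op2 R x q)
    (A B C : Finset (Fin N)) (hAB : Disjoint A B) (hAC : Disjoint A C) (hBC : Disjoint B C)
    (x y z : GA n K) :
    shTerm R Rt (shTerm R Rt (embS A x) (embS B y) A B) (embS C z) (A ∪ B) C =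
      shTerm R Rt (embS A x) (shTerm R Rt (embS B y) (embS C z) B C) A (B ∪ C) := by
  have hw : (List.finRange N).Nodup := List.nodup_finRange N
  have hw' := List.nodup_reverse.mpr hw
  have hX := L_main (op2 R) (fun a b c d _ _ h1 h2 h3 h4 => op2_far R R a b c d h1 h2 h3 h4)
    hYBE A B C hAB hAC hBC _ hw'
  have hY := L_main_op (op2 R) (fun a b c d _ _ h1 h2 h3 h4 => op2_far R R a b c d h1 h2 h3 h4)
    hYBE A B C hAB hAC hBC _ hw
  have hT1 := T_one (op2 R) (op2 Rt) A B C hAB hAC hBC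
    (fun a b c d _ _ h1 h2 h3 h4 => op2_far Rt Rt a b c d h1 h2 h3 h4)
    (fun a b c d _ _ h1 h2 h3 h4 => op2_far Rt R a b c d h1 h2 h3 h4) hM1 _ hw
  have hT2 := T_two (op2 R) (op2 Rt) A B C hAB hAC hBC
    (fun a b c d _ _ h1 h2 h3 h4 => op2_far Rt Rt a b c d h1 h2 h3 h4)
    (fun a b c d _ _ h1 h2 h3 h4 => op2_far Rt R a b c d h1 h2 h3 h4) hM2 _ hw
  have hcC : Commute (embS C z) (YY (op2 R) A B (List.finRange N)) :=
    comm_YY _ _ _ _ _ fun a _ b _ ha hb => embS_comm_op2 C z R a b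
      (Finset.disjoint_left.mp hAC ha) (Finset.disjoint_left.mp hBC hb)
  have hcB : Commute (embS B y) (TT (op2 Rt) A C (List.finRange N)) :=
    comm_TT _ _ _ _ _ fun a ha c hc => embS_comm_op2 B y Rt a c
      (Finset.disjoint_left.mp hAB ha) (Finset.disjoint_right.mp hBC hc)
  have hcA : Commute (embS A x) (XX (op2 R) B C (List.finRange N).reverse) :=
    comm_XX _ _ _ _ _ fun b _ c _ hb hc => embS_comm_op2 A x R b c
      (Finset.disjoint_right.mp hAB hb) (Finset.disjoint_right.mp hAC hc)
  unfold shTerm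
  generalize XX (op2 R) (A ∪ B) C (List.finRange N).reverse = Xdc at *
  generalize XX (op2 R) A B (List.finRange N).reverse = Xab at *
  generalize XX (op2 R) A (B ∪ C) (List.finRange N).reverse = Xae at *
  generalize XX (op2 R) B C (List.finRange N).reverse = Xbc at *
  generalize YY (op2 R) (A ∪ B) C (List.finRange N) = Ydc at *
  generalize YY (op2 R) A B (List.finRange N) = Yab at *
  generalize YY (op2 R) A (B ∪ C) (List.finRange N) = Yae at *
  generalize YY (op2 R) B C (List.finRange N) = Ybc at *
  generalize TT (op2 Rt) (A ∪ B) C (List.finRange N) = Tdc at *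
  generalize TT (op2 Rt) A B (List.finRange N) = Tab at *
  generalize TT (op2 Rt) A (B ∪ C) (List.finRange N) = Tae at *
  generalize TT (op2 Rt) B C (List.finRange N) = Tbc at *
  generalize TT (op2 Rt) A C (List.finRange N) = Tac at *
  generalize embS A x = a at *
  generalize embS B y = b at *
  generalize embS C z = c at *
  calc Xdc * (Xab * a * Tab * b * Yab) * Tdc * c * Ydc
      = Xdc * Xab * a * Tab * b * (Yab * Tdc) * c * Ydc := by simp only [mul_assoc]
    _ = (Xdc * Xab) * a * Tab * (b * Tac) * Tbc * (Yab * c) * Ydc := by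
        rw [hT1]; simp only [mul_assoc]
    _ = Xae * (Xbc * a) * Tab * Tac * b * Tbc * c * (Yab * Ydc) := by
        rw [hX, hcB.eq, ← hcC.eq]; simp only [mul_assoc]
    _ = Xae * a * (Xbc * Tab * Tac) * b * Tbc * c * Ybc * Yae := by
        rw [hY, ← hcA.eq]; simp only [mul_assoc]
    _ = _ := by rw [← hT2]; simp only [mul_assoc]

theorem shTerm_sum_left {α : Type*} {N : ℕ} (s : Finset α) (A : α → Matrix (Idx n N) (Idx n N) K)
    (B : Matrix (Idx n N) (Idx n N) K) (U V : Finset (Fin N)) :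
    shTerm R Rt (∑ i ∈ s, A i) B U V = ∑ i ∈ s, shTerm R Rt (A i) B U V := by
  unfold shTerm
  simp only [Finset.mul_sum, Finset.sum_mul]

theorem shTerm_sum_right {α : Type*} {N : ℕ} (s : Finset α) (A : α → Matrix (Idx n N) (Idx n N) K)
    (B : Matrix (Idx n N) (Idx n N) K) (U V : Finset (Fin N)) :
    shTerm R Rt B (∑ i ∈ s, A i) U V = ∑ i ∈ s, shTerm R Rt B (A i) U V := by
  unfold shTerm
  simp only [Finset.mul_sum, Finset.sum_mul]

theorem triple_sum {α M : Type*} [Fintype α] [DecidableEq α] [AddCommMonoid M]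
    (F G : Finset α → Finset α → Finset α → M)
    (h : ∀ A B C, Disjoint A B → Disjoint A C → Disjoint B C → F A B C = G A B C) :
    ∑ S : Finset α, ∑ U ∈ S.powerset, F U (S \ U) Sᶜ =
      ∑ S : Finset α, ∑ U ∈ Sᶜ.powerset, G S U (Sᶜ \ U) := by
  rw [Finset.sum_sigma', Finset.sum_sigma']
  refine Finset.sum_bij' (fun p _ => ⟨p.2, p.1 \ p.2⟩) (fun p _ => ⟨p.1 ∪ p.2, p.1⟩) ?_ ?_ ?_ ?_ ?_
  · rintro ⟨S, U⟩ hp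
    simp only [Finset.mem_sigma, Finset.mem_univ, true_and, Finset.mem_powerset] at hp ⊢
    intro z hz
    simp_all
  · rintro ⟨S, U⟩ hp
    simp only [Finset.mem_sigma, Finset.mem_univ, true_and, Finset.mem_powerset] at hp ⊢
    exact Finset.subset_union_left
  · rintro ⟨S, U⟩ hp
    simp only [Finset.mem_sigma, Finset.mem_univ, true_and, Finset.mem_powerset] at hp ⊢
    rw [Finset.union_sdiff_of_subset hp]
  · rintro ⟨S, U⟩ hp
    simp only [Finset.mem_sigma, Finset.mem_univ, true_and, Finset.mem_powerset] at hp ⊢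
    have : (S ∪ U) \ S = U := by
      ext z
      have := @hp z
      simp only [Finset.mem_compl] at this
      simp only [Finset.mem_sdiff, Finset.mem_union]
      tauto
    rw [this]
  · rintro ⟨S, U⟩ hp
    simp only [Finset.mem_sigma, Finset.mem_univ, true_and, Finset.mem_powerset] at hp ⊢
    have : Uᶜ \ (S \ U) = Sᶜ := by
      ext z
      have := @hp z
      simp only [Finset.mem_sdiff, Finset.mem_compl]
      tauto
    rw [this]
    apply h
    · exact Finset.disjoint_sdiff
    · exact Finset.disjoint_of_subset_left hp disjoint_compl_right
    · exact Finset.disjoint_of_subset_left Finset.sdiff_subset disjoint_compl_right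

theorem Sx_empty {ι M : Type*} [DecidableEq ι] [Monoid M] (s : ι → M) (v : List ι) :
    Sx s ∅ v = 1 := by
  induction v with
  | nil => rfl
  | cons p v ih => simp [Sx, ih]

theorem Sx_one {ι M : Type*} [DecidableEq ι] [Monoid M] (P : Finset ι) (v : List ι) :
    Sx (fun _ => (1 : M)) P v = 1 := by
  induction v with
  | nil => rfl
  | cons p v ih => simp [Sx, ih]

theorem XX_empty_left {ι M : Type*} [DecidableEq ι] [Monoid M] (r : ι → ι → M) (P : Finset ι)
    (v : List ι) : XX r ∅ P v = 1 := by
  induction v with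
  | nil => rfl
  | cons p v ih => simp [XX, ih, Sx_empty]

theorem XX_empty_right {ι M : Type*} [DecidableEq ι] [Monoid M] (r : ι → ι → M) (P : Finset ι)
    (v : List ι) : XX r P ∅ v = 1 := by
  induction v with
  | nil => rfl
  | cons p v ih => simp [XX, ih]

theorem YY_empty_left {ι M : Type*} [DecidableEq ι] [Monoid M] (r : ι → ι → M) (P : Finset ι)
    (v : List ι) : YY r ∅ P v = 1 := by
  induction v with
  | nil => rfl
  | cons p v ih => simp [YY, ih, ← Sx_reverse, Sx_empty]

theorem YY_empty_right {ι M : Type*} [DecidableEq ι] [Monoid M] (r : ι → ι → M) (P : Finset ι)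
    (v : List ι) : YY r P ∅ v = 1 := by
  induction v with
  | nil => rfl
  | cons p v ih => simp [YY, ih]

theorem embS_univ {N : ℕ} (x : GA n K) : embS (Finset.univ : Finset (Fin N)) x = x N := by
  rw [← embS_eq (fun i : Fin N => i) strictMono_id Finset.univ (by simp) x]
  ext f g
  rw [embed_apply, if_pos (by intro b hb; exact absurd ⟨b, rfl⟩ hb), mul_one]
  rfl

theorem embS_gaOne_empty {N : ℕ} : embS (∅ : Finset (Fin N)) (gaOne : GA n K) = 1 := by
  rw [← embS_eq (fun i : Fin 0 => i.elim0) (fun i => i.elim0) ∅ (by simp) gaOne]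
  exact embed_one _

theorem embS_gaOne_ne {N : ℕ} (S : Finset (Fin N)) (h : S ≠ ∅) :
    embS S (gaOne : GA n K) = 0 := by
  unfold embS gaOne
  rw [dif_neg (by simpa using h), embed_zero]

theorem gaOne_mul (x : GA n K) : gaMul R Rt gaOne x = x := by
  funext N
  rw [gaMul_eq, Finset.sum_eq_single ∅]
  · rw [Finset.compl_empty, embS_gaOne_empty, embS_univ]
    unfold shTerm TT
    rw [XX_empty_left, YY_empty_left, Sx_empty]
    simp
  · intro S _ h
    rw [embS_gaOne_ne S h]
    simp [shTerm]
  · intro h; exact absurd (Finset.mem_univ _) h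

theorem mul_gaOne (x : GA n K) : gaMul R Rt x gaOne = x := by
  funext N
  rw [gaMul_eq, Finset.sum_eq_single Finset.univ]
  · rw [Finset.compl_univ, embS_gaOne_empty, embS_univ]
    unfold shTerm TT
    simp only [XX_empty_right, YY_empty_right, Sx_empty, Sx_one]
    simp
  · intro S _ h
    rw [embS_gaOne_ne Sᶜ (by simpa using h)]
    simp [shTerm]
  · intro h; exact absurd (Finset.mem_univ _) h



theorem gaMul_assoc'
    (hYBE : ∀ (N : ℕ) (a b c : Fin N), a ≠ b → a ≠ c → b ≠ c →
      op2 R a b * op2 R a c * op2 R b c = op2 R b c * op2 R a c * op2 R a b)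
    (hM1 : ∀ (N : ℕ) (c x q : Fin N), c ≠ x → c ≠ q → x ≠ q →
      op2 Rt x c * op2 Rt q c * op2 R x q = op2 R x q * op2 Rt q c * op2 Rt x c)
    (hM2 : ∀ (N : ℕ) (x q a : Fin N), x ≠ q → x ≠ a → q ≠ a →
      op2 R x q * op2 Rt a x * op2 Rt a q = op2 Rt a q * op2 Rt a x * op2 R x q)
    (x y z : GA n K) :
    gaMul R Rt (gaMul R Rt x y) z = gaMul R Rt x (gaMul R Rt y z) := by
  funext N
  rw [gaMul_eq, gaMul_eq]
  have key := triple_sum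
    (fun A B C : Finset (Fin N) =>
      shTerm R Rt (shTerm R Rt (embS A x) (embS B y) A B) (embS C z) (A ∪ B) C)
    (fun A B C : Finset (Fin N) =>
      shTerm R Rt (embS A x) (shTerm R Rt (embS B y) (embS C z) B C) A (B ∪ C))
    (fun A B C hAB hAC hBC => shTerm_assoc R Rt (hYBE N) (hM1 N) (hM2 N)
      A B C hAB hAC hBC x y z)
  refine Eq.trans ?_ (key.trans ?_)
  · refine Finset.sum_congr rfl fun S _ => ?_
    rw [embS_gaMul, shTerm_sum_left]
    refine Finset.sum_congr rfl fun U hU => ?_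
    rw [Finset.union_sdiff_of_subset (Finset.mem_powerset.mp hU)]
  · refine Finset.sum_congr rfl fun S _ => ?_
    rw [embS_gaMul, shTerm_sum_right]
    refine Finset.sum_congr rfl fun U hU => ?_
    rw [Finset.union_sdiff_of_subset (Finset.mem_powerset.mp hU)]

end Main

/-- Associativity and unitality of the shuffle product, under: Yang–Baxter for
`R`, the mixed Yang–Baxter relations for `R̃`, and unitarity
`R₁₂R₂₁ = f·Id = R₂₁R₁₂` with `R, R̃ ∈ Aut(V⊗V)`. -/
theorem shuffle_product_associative (n : ℕ) (K : Type*) [Field K]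
    (R Rt : Matrix (Idx n 2) (Idx n 2) K) (f : K)
    (hR : IsUnit R) (hRt : IsUnit Rt)
    (hYBE : embed (![0, 1] : Fin 2 → Fin 3) R * embed (![0, 2] : Fin 2 → Fin 3) R *
        embed (![1, 2] : Fin 2 → Fin 3) R =
      embed (![1, 2] : Fin 2 → Fin 3) R * embed (![0, 2] : Fin 2 → Fin 3) R *
        embed (![0, 1] : Fin 2 → Fin 3) R)
    (hM1 : embed (![1, 0] : Fin 2 → Fin 3) Rt * embed (![2, 0] : Fin 2 → Fin 3) Rt *
        embed (![1, 2] : Fin 2 → Fin 3) R =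
      embed (![1, 2] : Fin 2 → Fin 3) R * embed (![2, 0] : Fin 2 → Fin 3) Rt *
        embed (![1, 0] : Fin 2 → Fin 3) Rt)
    (hM2 : embed (![0, 1] : Fin 2 → Fin 3) R * embed (![2, 0] : Fin 2 → Fin 3) Rt *
        embed (![2, 1] : Fin 2 → Fin 3) Rt =
      embed (![2, 1] : Fin 2 → Fin 3) Rt * embed (![2, 0] : Fin 2 → Fin 3) Rt *
        embed (![0, 1] : Fin 2 → Fin 3) R)
    (hU1 : R * embed (![1, 0] : Fin 2 → Fin 2) R =
      f • (1 : Matrix (Idx n 2) (Idx n 2) K))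
    (hU2 : embed (![1, 0] : Fin 2 → Fin 2) R * R =
      f • (1 : Matrix (Idx n 2) (Idx n 2) K)) :
    (∀ x y z : GA n K,
      gaMul R Rt (gaMul R Rt x y) z = gaMul R Rt x (gaMul R Rt y z)) ∧
    (∀ x : GA n K, gaMul R Rt gaOne x = x ∧ gaMul R Rt x gaOne = x) := by
  have h1 : ∀ (N : ℕ) (a b c : Fin N), a ≠ b → a ≠ c → b ≠ c →
      op2 R a b * op2 R a c * op2 R b c = op2 R b c * op2 R a c * op2 R a b := by
    intro N a b c h1 h2 h3
    exact op2_rel R R R R R R 0 1 0 2 1 2 1 2 0 2 0 1 hYBE a b c h1 h2 h3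
  have h2 : ∀ (N : ℕ) (c x q : Fin N), c ≠ x → c ≠ q → x ≠ q →
      op2 Rt x c * op2 Rt q c * op2 R x q = op2 R x q * op2 Rt q c * op2 Rt x c := by
    intro N a b c h1 h2 h3
    exact op2_rel Rt Rt R R Rt Rt 1 0 2 0 1 2 1 2 2 0 1 0 hM1 a b c h1 h2 h3
  have h3 : ∀ (N : ℕ) (x q a : Fin N), x ≠ q → x ≠ a → q ≠ a →
      op2 R x q * op2 Rt a x * op2 Rt a q = op2 Rt a q * op2 Rt a x * op2 R x q := by
    intro N a b c h1 h2 h3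
    exact op2_rel R Rt Rt Rt Rt R 0 1 2 0 2 1 2 1 2 0 0 1 hM2 a b c h1 h2 h3
  exact ⟨fun x y z => gaMul_assoc' R Rt h1 h2 h3 x y z,
    fun x => ⟨gaOne_mul R Rt x, mul_gaOne R Rt x⟩⟩
end

section
/- For A, B ∈ End(V) and the R-matrices R̃⁺, R̃⁻ related by R̃⁻(x) = ((R̃⁺)^{†₁}(1/x))^{-1})^{†₁}_{21} (equivalently R̃⁺_{21}(z)^{†₁} R̃⁻_{12}(1/z)^{†₁} = Id), one has Tr_{V⊗V}(R̃⁺_{21}(z) A₂ R̃⁻_{12}(1/z) B₁) = Tr(A)Tr(B); taking the residue at z = q̄^{-2} yields Tr_{V⊗V}((12) A₂ · R̃⁻_{12}(q̄²) · B₁) = 0. -/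
/-!
STATEMENT 19: For A, B ∈ End(V) and the R-matrices R̃⁺, R̃⁻ related by
`R̃⁺₂₁(z)^{†₁} R̃⁻₁₂(1/z)^{†₁} = Id` (i.e.
`R̃⁻(x) = (((R̃⁺)^{†₁}(1/x))⁻¹)^{†₁}_{21}`), one has
`Tr_{V⊗V}(R̃⁺₂₁(z) A₂ R̃⁻₁₂(1/z) B₁) = Tr(A)·Tr(B)`;
taking the residue at `z = q̄⁻²` (where `Res R̃⁺ = (q⁻¹-q)·(12)`) yields
`Tr_{V⊗V}((12) A₂ · R̃⁻₁₂(q̄²) · B₁) = 0`.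
Here `R̃⁺(x) = R₂₁(1/(x q̄²))` for the quantum affine gl_n R-matrix R, and
`R̃⁻` is given by its explicit rational formula (with `q̄₋ = (qⁿ q̄)⁻¹`).
-/

/-- The quantum affine gl_n R-matrix (entries indexed by pairs). -/
def Rm (n : ℕ) {K : Type*} [Field K] (q x : K) :
    Matrix (Fin n × Fin n) (Fin n × Fin n) K := fun p p' =>
  (if p = p' then (if p.1 = p.2 then (q - x * q⁻¹) / (1 - x) else 1) else 0) +
  (if p.1 ≠ p.2 ∧ p'.1 = p.2 ∧ p'.2 = p.1 then
    (q - q⁻¹) * (if p.1 < p.2 then x else 1) / (1 - x) else 0)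

/-- The flip of tensor factors on `End(V ⊗ V)`. -/
def flipM {n : ℕ} {K : Type*} [Field K]
    (M : Matrix (Fin n × Fin n) (Fin n × Fin n) K) :
    Matrix (Fin n × Fin n) (Fin n × Fin n) K := fun p p' =>
  M (p.2, p.1) (p'.2, p'.1)

/-- Partial transposition `†₁` in the first tensor factor:
`E_ij ⊗ E_kl ↦ E_ji ⊗ E_kl`. -/
def dag1 {n : ℕ} {K : Type*} [Field K]
    (M : Matrix (Fin n × Fin n) (Fin n × Fin n) K) :
    Matrix (Fin n × Fin n) (Fin n × Fin n) K := fun p p' =>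
  M (p'.1, p.2) (p.1, p'.2)

/-- `R̃⁺(x) = R₂₁(1/(x q̄²))`. -/
def Rtp (n : ℕ) {K : Type*} [Field K] (q qbar x : K) :
    Matrix (Fin n × Fin n) (Fin n × Fin n) K :=
  flipM (Rm n q ((x * qbar ^ 2)⁻¹))

/-- `R̃⁻(x)`, given by its explicit formula
`Σ E_ii⊗E_jj ((q⁻¹ - xqq̄₋²)/(1-xq̄₋²))^{δ_ij}
  - (q-q⁻¹) Σ_{i≠j} E_ij⊗E_ji q^{2(j-i)} (xq̄₋²)^{δ(i<j)}/(1-xq̄₋²)`,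
with `q̄₋ = (qⁿ q̄)⁻¹`. -/
def Rtm (n : ℕ) {K : Type*} [Field K] (q qbar x : K) :
    Matrix (Fin n × Fin n) (Fin n × Fin n) K := fun p p' =>
  (if p = p' then
    (if p.1 = p.2 then
      (q⁻¹ - x * q * ((q ^ n * qbar)⁻¹) ^ 2) / (1 - x * ((q ^ n * qbar)⁻¹) ^ 2)
    else 1) else 0) +
  (if p.1 ≠ p.2 ∧ p'.1 = p.2 ∧ p'.2 = p.1 then
    -(q - q⁻¹) * q ^ (2 * ((p.2 : ℤ) - (p.1 : ℤ))) *
      (if p.1 < p.2 then x * ((q ^ n * qbar)⁻¹) ^ 2 else 1) /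
      (1 - x * ((q ^ n * qbar)⁻¹) ^ 2) else 0)

/-- `A₂ = 1 ⊗ A` on `V ⊗ V`. -/
def leg2 {n : ℕ} {K : Type*} [Field K] (A : Matrix (Fin n) (Fin n) K) :
    Matrix (Fin n × Fin n) (Fin n × Fin n) K := fun p p' =>
  if p.1 = p'.1 then A p.2 p'.2 else 0

/-- `B₁ = B ⊗ 1` on `V ⊗ V`. -/
def leg1 {n : ℕ} {K : Type*} [Field K] (B : Matrix (Fin n) (Fin n) K) :
    Matrix (Fin n × Fin n) (Fin n × Fin n) K := fun p p' =>
  if p.2 = p'.2 then B p.1 p'.1 else 0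

/-- The permutation operator `(12)`. -/
def permM (n : ℕ) (K : Type*) [Field K] :
    Matrix (Fin n × Fin n) (Fin n × Fin n) K := fun p p' =>
  if p'.1 = p.2 ∧ p'.2 = p.1 then 1 else 0

/-- block form of a matrix supported on the diagonal pairs, identity elsewhere -/
def blk {n : ℕ} {K : Type*} [Field K] (M : Fin n → Fin n → K) :
    Matrix (Fin n × Fin n) (Fin n × Fin n) K := fun p p' =>
  if p.1 = p.2 then (if p'.1 = p'.2 then M p.1 p'.1 else 0) else (if p = p' then 1 else 0)

theorem blk_mul {n : ℕ} {K : Type*} [Field K] (M N : Fin n → Fin n → K)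
    (h : ∀ i k, ∑ j, M i j * N j k = if i = k then 1 else 0) :
    blk M * blk N = 1 := by
  ext ⟨a, b⟩ ⟨c, d⟩
  rw [Matrix.mul_apply, Fintype.sum_prod_type]
  by_cases hab : a = b
  · subst hab
    by_cases hcd : c = d
    · subst hcd
      have := h a c
      have e : ∀ x y : Fin n, blk M (a, a) (x, y) * blk N (x, y) (c, c) =
          if x = y then M a x * N x c else 0 := by
        intro x y
        by_cases hxy : x = y <;> simp [blk, hxy]
      simp only [e, Finset.sum_ite_eq, Finset.mem_univ, if_true, this, Matrix.one_apply,
        Prod.mk.injEq, and_self]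
    · have : ¬ (a = c ∧ a = d) := by rintro ⟨rfl, rfl⟩; exact hcd rfl
      have e : ∀ x y : Fin n, blk M (a, a) (x, y) * blk N (x, y) (c, d) = 0 := by
        intro x y
        by_cases hxy : x = y <;> simp [blk, hxy, hcd]
      simp [e, Matrix.one_apply, this]
  · simp only [blk, hab, if_false, Prod.mk.injEq, ite_mul, one_mul, zero_mul, Matrix.one_apply]
    rw [Finset.sum_eq_single a]
    · rw [Finset.sum_eq_single b]
      · simp [hab]
      · intro x _ hx; simp [Ne.symm hx]
      · simp
    · intro x _ hx
      simp [Ne.symm hx]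
    · simp

set_option maxHeartbeats 4000000 in
theorem sumA {K : Type*} [Field K] (q w u : K) (hq : q ≠ 0) (i k N : ℕ) :
    ∑ j ∈ Finset.range N, (q - q⁻¹) * (if j < i then w else 1) *
        (q ^ (2 * j) * (q ^ (2 * k))⁻¹ * (if k < j then u else 1)) =
      q ^ (2 * N) * q⁻¹ * (q ^ (2 * k))⁻¹ * (if N ≤ i then w else 1) * (if N ≤ k then 1 else u)
      - w * q⁻¹ * (q ^ (2 * k))⁻¹
      - (if i < N then (1 - w) * (q ^ (2 * i) * q⁻¹ * (q ^ (2 * k))⁻¹) *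
          (if k < i then u else 1) else 0)
      + (if k < N then (1 - u) * q * (if k < i then w else 1) else 0) := by
  induction N with
  | zero => simp; ring
  | succ N ih =>
    rw [Finset.sum_range_succ, ih]
    have hk : q ^ (2 * k) ≠ 0 := pow_ne_zero _ hq
    have hs : q ^ (2 * (N + 1)) = q ^ (2 * N) * q ^ 2 := by ring
    rw [hs]
    rcases lt_trichotomy N i with h1 | h1 | h1 <;> rcases lt_trichotomy N k with h2 | h2 | h2
    all_goals try subst h1
    all_goals try subst h2
    all_goals try split_ifs
    all_goals try (exfalso; omega)
    all_goals (field_simp; ring)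

theorem sumB {K : Type*} [Field K] (q u : K) (hq : q ≠ 0) (c N : ℕ) :
    ∑ b ∈ Finset.range N, (q - q⁻¹) *
        (q ^ (2 * c) * (q ^ (2 * b))⁻¹ * (if b < c then u else 1)) =
      - ((q ^ (2 * N))⁻¹ * q * q ^ (2 * c) * (if N ≤ c then u else 1))
      + u * q * q ^ (2 * c) + (if c < N then (1 - u) * q else 0) := by
  induction N with
  | zero => simp; ring
  | succ N ih =>
    rw [Finset.sum_range_succ, ih]
    have hk : q ^ (2 * c) ≠ 0 := pow_ne_zero _ hq
    have hs : q ^ (2 * (N + 1)) = q ^ (2 * N) * q ^ 2 := by ring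
    rw [hs]
    rcases lt_trichotomy N c with h1 | h1 | h1
    all_goals try subst h1
    all_goals split_ifs
    all_goals try (exfalso; omega)
    all_goals (field_simp; ring)

def Mf (n : ℕ) {K : Type*} [Field K] (q w : K) (i j : Fin n) : K :=
  (if i = j then q⁻¹ else 0) + (q - q⁻¹) / (1 - w) * (if (j : ℕ) < i then w else 1)

def Nf (n : ℕ) {K : Type*} [Field K] (q u : K) (j k : Fin n) : K :=
  (if j = k then q else 0) - (q - q⁻¹) / (1 - u) *
    (q ^ (2 * (j : ℕ)) * (q ^ (2 * (k : ℕ)))⁻¹ * (if (k : ℕ) < j then u else 1))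

theorem dagM (n : ℕ) {K : Type*} [Field K] (q w : K) (hw : 1 - w ≠ 0) :
    dag1 (Rm n q w) = blk (Mf n q w) := by
  ext ⟨a, b⟩ ⟨c, d⟩
  simp only [dag1, Rm, blk, Mf, Prod.mk.injEq, Fin.val_fin_lt]
  by_cases hab : a = b
  · subst hab
    by_cases hcd : c = d
    · subst hcd
      by_cases hac : a = c
      · subst hac; simp; field_simp; ring
      · simp [hac, Ne.symm hac]; split_ifs <;> ring
    · have : ¬ (c = a ∧ a = d) := by rintro ⟨rfl, rfl⟩; exact hcd rfl
      have h3 : d ≠ c := Ne.symm hcd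
      simp [this, hcd, h3]
  · by_cases hac : a = c
    · subst hac; simp [hab]
    · simp [hab, hac, Ne.symm hac]

theorem dagN (n : ℕ) {K : Type*} [Field K] (q qbar x : K) (hq : q ≠ 0)
    (hw : 1 - x * ((q ^ n * qbar)⁻¹) ^ 2 ≠ 0) :
    dag1 (Rtm n q qbar x) = blk (Nf n q (x * ((q ^ n * qbar)⁻¹) ^ 2)) := by
  have hz : ∀ a b : ℕ, q ^ (2 * ((a : ℤ) - (b : ℤ))) = q ^ (2 * a) * (q ^ (2 * b))⁻¹ := by
    intro a b
    rw [mul_sub, zpow_sub₀ hq]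
    rw [div_eq_mul_inv]
    norm_cast
  have hx : x * q * ((q ^ n * qbar)⁻¹) ^ 2 = x * ((q ^ n * qbar)⁻¹) ^ 2 * q := by ring
  ext ⟨a, b⟩ ⟨c, d⟩
  simp only [dag1, Rtm, blk, Nf, Prod.mk.injEq, Fin.val_fin_lt, hz, hx]
  generalize x * ((q ^ n * qbar)⁻¹) ^ 2 = u at *
  by_cases hab : a = b
  · subst hab
    by_cases hcd : c = d
    · subst hcd
      by_cases hac : a = c
      · subst hac
        have : q ^ (2 * (a : ℕ)) ≠ 0 := pow_ne_zero _ hq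
        simp [this]; field_simp; ring
      · simp [hac, Ne.symm hac]; split_ifs <;> ring
    · have : ¬ (c = a ∧ a = d) := by rintro ⟨rfl, rfl⟩; exact hcd rfl
      have h3 : d ≠ c := Ne.symm hcd
      simp [this, hcd, h3]
  · by_cases hac : a = c
    · subst hac; simp [hab]
    · simp [hab, hac, Ne.symm hac]

theorem MN_one (n : ℕ) {K : Type*} [Field K] (q w u : K) (hq : q ≠ 0) (hw : 1 - w ≠ 0)
    (hu : 1 - u ≠ 0) (hwu : q ^ (2 * n) * u = w) (i k : Fin n) :
    ∑ j, Mf n q w i j * Nf n q u j k = if i = k then 1 else 0 := by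
  have key := sumA q w u hq i k n
  rw [← Fin.sum_univ_eq_sum_range (fun j => (q - q⁻¹) * (if j < (i : ℕ) then w else 1) *
        (q ^ (2 * j) * (q ^ (2 * (k : ℕ)))⁻¹ * (if (k : ℕ) < j then u else 1))) n] at key
  simp only [i.2, k.2, not_le.mpr i.2, not_le.mpr k.2, if_true, if_false] at key
  have hk : q ^ (2 * (k : ℕ)) ≠ 0 := pow_ne_zero _ hq
  have h0 : q ^ (2 * n) * q⁻¹ * (q ^ (2 * (k : ℕ)))⁻¹ * 1 * u =
      w * q⁻¹ * (q ^ (2 * (k : ℕ)))⁻¹ := by rw [← hwu]; ring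
  rw [h0, sub_self, zero_sub] at key
  have e : ∀ j, Mf n q w i j * Nf n q u j k =
      (if i = j then q⁻¹ * Nf n q u j k else 0) +
      (if j = k then (q - q⁻¹) / (1 - w) * (if (j : ℕ) < i then w else 1) * q else 0) -
      (q - q⁻¹) / ((1 - w) * (1 - u)) * ((q - q⁻¹) * (if (j : ℕ) < i then w else 1) *
        (q ^ (2 * (j : ℕ)) * (q ^ (2 * (k : ℕ)))⁻¹ * (if (k : ℕ) < j then u else 1))) := by
    intro j
    simp only [Mf, Nf]
    generalize (if (j : ℕ) < i then w else 1) = m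
    generalize (if (k : ℕ) < j then u else 1) = l
    split_ifs <;> field_simp <;> ring
  simp only [e, Finset.sum_sub_distrib, Finset.sum_add_distrib, ← Finset.mul_sum, key]
  simp only [Finset.sum_ite_eq, Finset.sum_ite_eq', Finset.mem_univ, if_true, Nf]
  generalize (if (k : ℕ) < i then w else 1) = m
  generalize (if (k : ℕ) < i then u else 1) = l
  split_ifs <;> field_simp <;> ring

theorem rowN (n : ℕ) {K : Type*} [Field K] (q u : K) (hq : q ≠ 0)
    (hu : 1 - u ≠ 0) (hwu : q ^ (2 * n) * u = 1) (c : Fin n) :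
    ∑ b, Nf n q u c b = 0 := by
  have key := sumB q u hq c n
  rw [← Fin.sum_univ_eq_sum_range (fun b => (q - q⁻¹) *
        (q ^ (2 * (c : ℕ)) * (q ^ (2 * b))⁻¹ * (if b < (c : ℕ) then u else 1))) n] at key
  simp only [c.2, not_le.mpr c.2, if_true, if_false] at key
  have hu' : (q ^ (2 * n))⁻¹ = u := inv_eq_of_mul_eq_one_right hwu
  rw [hu'] at key
  have e : ∀ b, Nf n q u c b = (if c = b then q else 0) - (1 - u)⁻¹ * ((q - q⁻¹) *
        (q ^ (2 * (c : ℕ)) * (q ^ (2 * (b : ℕ)))⁻¹ * (if (b : ℕ) < (c : ℕ) then u else 1))) := by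
    intro b; simp only [Nf]; ring
  simp only [e, Finset.sum_sub_distrib, ← Finset.mul_sum, key]
  simp
  field_simp
  ring

theorem trace_gen {n : ℕ} {K : Type*} [Field K] (M N : Matrix (Fin n × Fin n) (Fin n × Fin n) K)
    (A B : Matrix (Fin n) (Fin n) K) :
    Matrix.trace (M * leg2 A * N * leg1 B) =
      ∑ e, ∑ d', ∑ a, ∑ d, (dag1 N * dag1 M) (e, d') (a, d) * A d d' * B e a := by
  have h1 : ∀ p r d', (M * leg2 A) p (r, d') = ∑ d, M p (r, d) * A d d' := by
    intro p r d'
    rw [Matrix.mul_apply, Fintype.sum_prod_type, Finset.sum_eq_single r]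
    · simp [leg2]
    · intro x _ hx; simp [leg2, hx]
    · simp
  have h2 : ∀ X : Matrix (Fin n × Fin n) (Fin n × Fin n) K, ∀ p a b,
      (X * leg1 B) p (a, b) = ∑ e, X p (e, b) * B e a := by
    intro X p a b
    rw [Matrix.mul_apply, Fintype.sum_prod_type]
    simp [leg1]
  simp only [Matrix.trace, Matrix.diag, Fintype.sum_prod_type, h2]
  simp only [Matrix.mul_apply (M := M * leg2 A), Fintype.sum_prod_type, h1,
    Matrix.mul_apply (M := dag1 N), dag1, Finset.sum_mul]
  calc _ = ∑ a, ∑ e, ∑ b, ∑ c, ∑ d', ∑ d, M (a, b) (c, d) * A d d' * N (c, d') (e, b) * B e a := 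
        Finset.sum_congr rfl fun a _ => Finset.sum_comm
    _ = ∑ e, ∑ a, ∑ b, ∑ c, ∑ d', ∑ d, M (a, b) (c, d) * A d d' * N (c, d') (e, b) * B e a := 
        Finset.sum_comm
    _ = ∑ e, ∑ a, ∑ d', ∑ d, ∑ c, ∑ b,
          M (a, b) (c, d) * A d d' * N (c, d') (e, b) * B e a := by
        refine Finset.sum_congr rfl fun e _ => Finset.sum_congr rfl fun a _ => ?_
        rw [Finset.sum_comm]
        calc _ = ∑ c, ∑ d', ∑ d, ∑ b, M (a, b) (c, d) * A d d' * N (c, d') (e, b) * B e a := by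
              refine Finset.sum_congr rfl fun c _ => ?_
              rw [Finset.sum_comm]
              exact Finset.sum_congr rfl fun d' _ => Finset.sum_comm
          _ = _ := by
              rw [Finset.sum_comm]
              exact Finset.sum_congr rfl fun d' _ => Finset.sum_comm
    _ = _ := by
        refine Finset.sum_congr rfl fun e _ => ?_
        rw [Finset.sum_comm]
        refine Finset.sum_congr rfl fun d' _ => Finset.sum_congr rfl fun a _ =>
          Finset.sum_congr rfl fun d _ => Finset.sum_congr rfl fun c _ =>
          Finset.sum_congr rfl fun b _ => ?_
        ring

theorem blk_perm {n : ℕ} {K : Type*} [Field K] (N : Fin n → Fin n → K)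
    (h : ∀ c, ∑ b, N c b = 0) : blk N * dag1 (permM n K) = 0 := by
  ext ⟨a, b⟩ ⟨c, d⟩
  rw [Matrix.mul_apply, Fintype.sum_prod_type]
  by_cases hab : a = b
  · subst hab
    by_cases hcd : c = d
    · subst hcd
      simp [blk, dag1, permM, ite_mul, h]
    · have h3 : d ≠ c := Ne.symm hcd
      simp [blk, dag1, permM, hcd, h3]
  · simp only [blk, dag1, permM, hab, if_false, Matrix.zero_apply]
    refine Finset.sum_eq_zero fun x _ => Finset.sum_eq_zero fun y _ => ?_
    by_cases h1 : (a, b) = (x, y)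
    · obtain ⟨rfl, rfl⟩ := Prod.mk.inj h1
      simp [hab]
    · simp [h1]

theorem trace_identities (n : ℕ) (K : Type*) [Field K] (q qbar : K)
    (hq : q ≠ 0) (hqb : qbar ≠ 0) (hqn : q ^ (2 * n) ≠ 1)
    (A B : Matrix (Fin n) (Fin n) K) (z : K) (hz : z ≠ 0)
    (hp1 : z * qbar ^ 2 ≠ 1) (hp2 : z⁻¹ * ((q ^ n * qbar)⁻¹) ^ 2 ≠ 1) :
    -- the defining relation R̃⁺₂₁(z)^{†₁} R̃⁻₁₂(1/z)^{†₁} = Id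
    dag1 (flipM (Rtp n q qbar z)) * dag1 (Rtm n q qbar z⁻¹) = 1 ∧
    -- Tr_{V⊗V}(R̃⁺₂₁(z) A₂ R̃⁻₁₂(1/z) B₁) = Tr(A)·Tr(B)
    Matrix.trace (flipM (Rtp n q qbar z) * leg2 A * Rtm n q qbar z⁻¹ * leg1 B) =
      Matrix.trace A * Matrix.trace B ∧
    -- the residue at z = q̄⁻²: Tr((12) A₂ R̃⁻₁₂(q̄²) B₁) = 0
    Matrix.trace (permM n K * leg2 A * Rtm n q qbar (qbar ^ 2) * leg1 B) = 0 := by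
  have hqN : q ^ (2 * n) ≠ 0 := pow_ne_zero _ hq
  have hff : flipM (Rtp n q qbar z) = Rm n q ((z * qbar ^ 2)⁻¹) := rfl
  have hw : 1 - (z * qbar ^ 2)⁻¹ ≠ 0 := by
    intro h
    exact hp1 (inv_eq_one.mp (sub_eq_zero.mp h).symm)
  have hu : 1 - z⁻¹ * ((q ^ n * qbar)⁻¹) ^ 2 ≠ 0 := fun h => hp2 (sub_eq_zero.mp h).symm
  have hwu : q ^ (2 * n) * (z⁻¹ * ((q ^ n * qbar)⁻¹) ^ 2) = (z * qbar ^ 2)⁻¹ := by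
    rw [mul_comm 2 n, pow_mul]
    field_simp
  have h1 : dag1 (flipM (Rtp n q qbar z)) * dag1 (Rtm n q qbar z⁻¹) = 1 := by
    rw [hff, dagM n q _ hw, dagN n q qbar _ hq hu]
    exact blk_mul _ _ (MN_one n q _ _ hq hw hu hwu)
  refine ⟨h1, ?_, ?_⟩
  · rw [trace_gen, mul_eq_one_comm.mp h1]
    simp only [Matrix.one_apply, Prod.mk.injEq, ite_mul, one_mul, zero_mul, ite_and]
    simp only [Finset.sum_ite_eq, Finset.mem_univ, if_true, Finset.sum_ite_irrel,
      Finset.sum_const_zero, Matrix.trace, Matrix.diag]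
    rw [Finset.sum_mul_sum, Finset.sum_comm]
  · have hwu' : q ^ (2 * n) * (qbar ^ 2 * ((q ^ n * qbar)⁻¹) ^ 2) = 1 := by
      rw [mul_comm 2 n, pow_mul]
      field_simp
    have hu' : 1 - qbar ^ 2 * ((q ^ n * qbar)⁻¹) ^ 2 ≠ 0 := by
      intro h
      rw [← sub_eq_zero.mp h, mul_one] at hwu'
      exact hqn hwu'
    rw [trace_gen, dagN n q qbar _ hq hu', blk_perm _ (rowN n q _ hq hu' hwu')]
    simp
end
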